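/- Let p ≥ 2 be an integer and η > 0. Let (c_k)_{k≥1} be complex numbers, (φ_k)_{k≥1} real numbers, and γ_k : (0,∞) → ℂ functions such that V(x) = Σ_{k=1}^∞ c_k e^{−iφ_k x} γ_k(x) is real-valued, and assume: τ := sup_k Var(γ_k,(0,∞)) < ∞; ∫_0^∞ (sup_k |γ_k(x)|)^p dx < ∞; Σ_k |c_k| < ∞; Σ_{k_1,…,k_j} |c_{k_1} ⋯ c_{k_j} h_j(η; φ_{k_1},…,φ_{k_j})| < ∞ for j = 1,…,p−1; and Kη ≠ ε_1 φ_{k_1} + ⋯ + ε_J φ_{k_J} for all integers 1 ≤ K ≤ J ≤ p, all indices and all signs ε_i ∈ {+1,−1}. Let θ : (0,∞) → ℝ be locally absolutely continuous with θ'(x) = (V(x)/η)·(cos(ηx + 2θ(x)) − 1) for almost every x, and set β_k(x) = c_k e^{−iφ_k x} γ_k(x), S_{J,K}(x) = Σ_{m_1,…,m_J=1}^∞ f_{J,K}(η; φ_{m_1},…,φ_{m_J}) β_{m_1}(x) ⋯ β_{m_J}(x) e^{iK(ηx + 2θ(x))}, and E_{J,K} = Σ_{m_1,…,m_J=1}^∞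 |c_{m_1} ⋯ c_{m_J} g_{J,K}(η; φ_{m_1},…,φ_{m_J})|. Then for every J ∈ {1,…,p−1} and all 0 ≤ a < b < ∞, | ∫_a^b ( Σ_{K=1}^{J} S_{J,K}(x) − Σ_{K=0}^{J+1} S_{J+1,K}(x) ) dx | ≤ Σ_{K=1}^{J} (1/K) E_{J,K} τ^J. -/

import Mathlib

open scoped BigOperators ENNReal
open MeasureTheory

/-- The functions `h_J` of `1+J` real variables (extra variables beyond the first `J`
are ignored), defined recursively by `h_0(η) = 1` and
`h_J(η;φ_1,…,φ_J) = (η - φ_1 - ⋯ - φ_J)⁻¹ Σ_{j=0}^{J-1} h_j(η;φ_1,…,φ_j) h_{J-j-1}(η;φ_{j+1},…,φ_{J-1})`. -/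
noncomputable def hFun : ℕ → ℝ → (ℕ → ℝ) → ℝ
  | 0, _, _ => 1
  | (J+1), η, φ =>
      (η - ∑ i ∈ Finset.range (J+1), φ i)⁻¹ *
        ∑ j ∈ (Finset.range (J+1)).attach,
          hFun j.1 η φ * hFun (J - j.1) η (fun i => φ (i + j.1))
  termination_by J _ _ => J
  decreasing_by
  · exact Nat.lt_of_lt_of_le (Finset.mem_range.mp j.2) (Nat.le_refl _)
  · exact Nat.lt_succ_of_le (Nat.sub_le J j.1)

/-- Pad a tuple `m : Fin J → ℕ` of indices into a function `ℕ → ℝ` listing `φ_{m_1},…,φ_{m_J}`. -/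
noncomputable def padFin (J : ℕ) (φ : ℕ → ℝ) (m : Fin J → ℕ) : ℕ → ℝ :=
  fun n => if h : n < J then φ (m ⟨n, h⟩) else 0

/-- ω_a coefficients: ω_0 = -1, ω_{±1} = 1/2, otherwise 0. -/
noncomputable def omegaCoef : ℤ → ℝ := fun a =>
  if a = 0 then -1 else if a = 1 ∨ a = -1 then (1 : ℝ) / 2 else 0

/-- The functions `f_{J,K}` of `1+J` real variables (extra variables beyond the first `J`
are ignored); `f_{J,K} = 0` unless `1 ≤ J` and `0 ≤ K ≤ J`. For `J ≥ 2`,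
`f_{J,K}(η;φ) = η⁻¹ Σ_{a=-1}^{1} ω_a (1/J!) Σ_{σ ∈ S_J} g_{J-1,K+a}(η;φ_{σ(1)},…,φ_{σ(J-1)})`,
where `g_{J,K}(η;φ) = -2K (Kη - φ_1 - ⋯ - φ_J)⁻¹ f_{J,K}(η;φ)` is inlined. -/
noncomputable def fAux : ℕ → ℤ → ℝ → (ℕ → ℝ) → ℝ
  | 0, _, _, _ => 0
  | 1, K, η, _ => if K = 0 then -η⁻¹ else if K = 1 then η⁻¹ else 0
  | (J+2), K, η, φ =>
      if 0 ≤ K ∧ K ≤ (J : ℤ) + 2 then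
        η⁻¹ * ∑ a ∈ ({-1, 0, 1} : Finset ℤ), omegaCoef a *
          ((Nat.factorial (J+2) : ℝ)⁻¹ *
            ∑ σ : Equiv.Perm (Fin (J+2)),
              (fun ψ : ℕ → ℝ =>
                (-2 * ((K + a : ℤ) : ℝ)) /
                    (((K + a : ℤ) : ℝ) * η - ∑ i ∈ Finset.range (J+1), ψ i) *
                  fAux (J+1) (K+a) η ψ)
              (fun i => if h : i < J+2 then φ (σ ⟨i, h⟩) else φ i))
      else 0

/-- The functions `g_{J,K} = -2K (Kη - φ_1 - ⋯ - φ_J)⁻¹ f_{J,K}`. -/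
noncomputable def gAux (J : ℕ) (K : ℤ) (η : ℝ) (φ : ℕ → ℝ) : ℝ :=
  (-2 * (K : ℝ)) / ((K : ℝ) * η - ∑ i ∈ Finset.range J, φ i) * fAux J K η φ

/-- Symmetric product `p ⊙ q` of a function of `1+I` variables and one of `1+J` variables. -/
noncomputable def symProd (I J : ℕ) (p q : ℝ → (ℕ → ℝ) → ℝ) (η : ℝ) (φ : ℕ → ℝ) : ℝ :=
  (Nat.factorial (I + J) : ℝ)⁻¹ *
    ∑ σ : Equiv.Perm (Fin (I + J)),
      p η (fun i => if h : i < I + J then φ (σ ⟨i, h⟩) else φ i) *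
      q η (fun i => if h : i + I < I + J then φ (σ ⟨i + I, h⟩) else φ (i + I))

/-- `E_{J,K} = Σ_{m_1,…,m_J} |c_{m_1} ⋯ c_{m_J} g_{J,K}(η;φ_{m_1},…,φ_{m_J})| ∈ [0,∞]`. -/
noncomputable def EFun (η : ℝ) (c : ℕ → ℂ) (φ : ℕ → ℝ) (J : ℕ) (K : ℤ) : ℝ≥0∞ :=
  ∑' m : Fin J → ℕ,
    (‖∏ i, c (m i)‖₊ : ℝ≥0∞) * (‖gAux J K η (padFin J φ m)‖₊ : ℝ≥0∞)

/-- `S_{J,K}(x) = Σ_{m_1,…,m_J} f_{J,K}(η;φ_{m_1},…,φ_{m_J}) β_{m_1}(x) ⋯ β_{m_J}(x)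
e^{iK(ηx + 2θ(x))}` with `β_k(x) = c_k e^{-iφ_k x} γ_k(x)`. -/
noncomputable def SFun (η : ℝ) (c : ℕ → ℂ) (φ : ℕ → ℝ) (γ : ℕ → ℝ → ℂ) (θ : ℝ → ℝ)
    (J K : ℕ) (x : ℝ) : ℂ :=
  ∑' m : Fin J → ℕ,
    (fAux J (K : ℤ) η (padFin J φ m) : ℂ) *
      (∏ i, (c (m i) * Complex.exp (-Complex.I * φ (m i) * x) * γ (m i) x)) *
      Complex.exp (Complex.I * K * (η * x + 2 * θ x))

/-!
Functions on words in the indices `k` form a commutative algebra under the shuffle product, and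
multiplication by the sum of the frequencies of a word is a derivation `D` of it. The symmetrization
`Y` of `h` (normalized by powers of `η`) satisfies `η Y - D Y = η⁻¹ Y² · letter` on nonempty words,
so that `U = 1 - Y` solves a Riccati equation, and by the Leibniz rule the powers `U ^ K` satisfy
the recursion that defines `J! g_{J,K} / 2`. Hence `J! g_{J,K} = 2 U ^ K`, and the absolute
summability of the `h_j` passes to the `g_{J,K}` because a weighted `ℓ¹` norm is compatible with
shuffle products.

On the analytic side, the recursion for `f` and the equation for `θ'` turn `∑_K S_{J+1,K}` into `θ'`
times a series in the `g_{J,K}`. Since `f_{J,K} = -(Kη - ∑ φ) g_{J,K} / (2K)`, the integrand is then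
termwise `-g_{J,K} / (2K) · ∏ c γ · P' e^{iP}` with `P` the total phase. Integrating by parts
against the product of the `γ`, which have bounded variation and vanish at infinity, bounds the
integral of each term by `|∏ c · g_{J,K}| τ ^ J / K`.
-/

/-- The shuffle algebra: functions on words in the alphabet `ι`, multiplied by summing over all
ways of splitting a word into two complementary subwords. -/
structure WordFun (ι R : Type*) where
  /-- The underlying function. -/
  toFun : List ι → R

namespace WordFun

instance {ι R : Type*} : FunLike (WordFun ι R) (List ι) R :=
  ⟨toFun, fun ⟨_⟩ ⟨_⟩ h => congrArg mk h⟩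

@[simp] theorem mk_apply {ι R : Type*} (f : List ι → R) (l : List ι) : mk f l = f l := rfl

@[ext] theorem ext {ι R : Type*} {F G : WordFun ι R} (h : ∀ l, F l = G l) : F = G :=
  DFunLike.ext F G h

/-- The identification with plain functions, along which the module structure is transported. -/
private def equivFun (ι R : Type*) : WordFun ι R ≃ (List ι → R) :=
  ⟨toFun, mk, fun _ => rfl, fun _ => rfl⟩

/-- The function `l ↦ F (a :: l)`, which lets us argue by induction on the length of words. -/
def consLeft {ι R : Type*} (a : ι) (F : WordFun ι R) : WordFun ι R :=
  ⟨fun l => F (a :: l)⟩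

@[simp] theorem consLeft_apply {ι R : Type*} (a : ι) (F : WordFun ι R) (l : List ι) :
    consLeft a F l = F (a :: l) := rfl

section ShuffleAlgebra

variable {ι R : Type*} [CommRing R] {F G H : WordFun ι R}

instance : AddCommGroup (WordFun ι R) := (equivFun ι R).addCommGroup

instance : Module R (WordFun ι R) := (equivFun ι R).module R

@[simp] theorem zero_apply (l : List ι) : (0 : WordFun ι R) l = 0 := rfl

@[simp] theorem add_apply (F G : WordFun ι R) (l : List ι) : (F + G) l = F l + G l := rfl

@[simp] theorem sub_apply (F G : WordFun ι R) (l : List ι) : (F - G) l = F l - G l := rfl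

@[simp] theorem smul_apply (r : R) (F : WordFun ι R) (l : List ι) : (r • F) l = r * F l := rfl

@[simp] theorem consLeft_zero (a : ι) : consLeft a (0 : WordFun ι R) = 0 := rfl

@[simp] theorem consLeft_add (a : ι) (F G : WordFun ι R) :
    consLeft a (F + G) = consLeft a F + consLeft a G := rfl

@[simp] theorem consLeft_smul (a : ι) (r : R) (F : WordFun ι R) :
    consLeft a (r • F) = r • consLeft a F := rfl

/-- The value on a word of the shuffle product: each letter goes to one of the two factors. -/
def shuffle : List ι → WordFun ι R → WordFun ι R → R
  | [], F, G => F [] * G []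
  | a :: l, F, G => shuffle l (consLeft a F) G + shuffle l F (consLeft a G)

instance : Mul (WordFun ι R) := ⟨fun F G => ⟨fun l => shuffle l F G⟩⟩

instance : One (WordFun ι R) := ⟨⟨fun l => if l.length = 0 then 1 else 0⟩⟩

@[simp] theorem one_nil : (1 : WordFun ι R) [] = 1 := rfl

@[simp] theorem consLeft_one (a : ι) : consLeft a (1 : WordFun ι R) = 0 := rfl

@[simp] theorem mul_nil (F G : WordFun ι R) : (F * G) [] = F [] * G [] := rfl

@[simp] theorem consLeft_mul (a : ι) (F G : WordFun ι R) :
    consLeft a (F * G) = consLeft a F * G + F * consLeft a G := rfl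

theorem mul_cons (a : ι) (F G : WordFun ι R) (l : List ι) :
    (F * G) (a :: l) = (consLeft a F * G) l + (F * consLeft a G) l := rfl

private theorem zero_mul_apply (G : WordFun ι R) (l : List ι) : (0 * G) l = 0 := by
  induction l generalizing G with
  | nil => simp
  | cons a l ih => simp [mul_cons, ih]

private theorem one_mul_apply (G : WordFun ι R) (l : List ι) : (1 * G) l = G l := by
  induction l generalizing G with
  | nil => simp
  | cons a l ih => simp [mul_cons, ih, zero_mul_apply]

private theorem mul_comm_apply (F G : WordFun ι R) (l : List ι) : (F * G) l = (G * F) l := by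
  induction l generalizing F G with
  | nil => exact mul_comm _ _
  | cons a l ih => rw [mul_cons, mul_cons, ih, ih F, add_comm]

private theorem add_mul_apply (F G H : WordFun ι R) (l : List ι) :
    ((F + G) * H) l = (F * H) l + (G * H) l := by
  induction l generalizing F G H with
  | nil => exact add_mul _ _ _
  | cons a l ih => simp only [mul_cons, consLeft_add, ih]; abel

private theorem mul_add_apply (F G H : WordFun ι R) (l : List ι) :
    (F * (G + H)) l = (F * G) l + (F * H) l := by
  simp only [mul_comm_apply F, add_mul_apply]

private theorem mul_assoc_apply (F G H : WordFun ι R) (l : List ι) :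
    (F * G * H) l = (F * (G * H)) l := by
  induction l generalizing F G H with
  | nil => exact mul_assoc _ _ _
  | cons a l ih => simp only [mul_cons, consLeft_mul, add_mul_apply, mul_add_apply, ih, add_assoc]

private theorem smul_mul_apply (r : R) (F G : WordFun ι R) (l : List ι) :
    (r • F * G) l = r * (F * G) l := by
  induction l generalizing F G with
  | nil => exact mul_assoc _ _ _
  | cons a l ih => simp only [mul_cons, consLeft_smul, ih, mul_add]

instance : CommRing (WordFun ι R) where
  __ : AddCommGroup (WordFun ι R) := inferInstance
  zero_mul G := ext fun l => zero_mul_apply G l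
  mul_zero G := ext fun l => (mul_comm_apply G 0 l).trans (zero_mul_apply G l)
  one_mul G := ext fun l => one_mul_apply G l
  mul_one G := ext fun l => (mul_comm_apply G 1 l).trans (one_mul_apply G l)
  mul_comm F G := ext fun l => mul_comm_apply F G l
  mul_assoc F G H := ext fun l => mul_assoc_apply F G H l
  left_distrib F G H := ext fun l => mul_add_apply F G H l
  right_distrib F G H := ext fun l => add_mul_apply F G H l

instance : Algebra R (WordFun ι R) :=
  Algebra.ofModule (fun r F G => ext fun l => smul_mul_apply r F G l) fun r F G => ext fun l => by
    rw [mul_comm_apply, smul_mul_apply, smul_apply, mul_comm_apply]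

theorem mul_apply_eq_zero {i j : ℕ} (hF : ∀ l, l.length < i → F l = 0)
    (hG : ∀ l, l.length < j → G l = 0) (l : List ι) (hl : l.length < i + j) : (F * G) l = 0 := by
  induction l generalizing F G i j with
  | nil =>
    rcases i.eq_zero_or_pos with rfl | hi
    · simp [hG [] (by simpa using hl)]
    · simp [hF [] hi]
  | cons a l ih =>
    have key : ∀ {F G : WordFun ι R} {i j : ℕ}, (∀ l, l.length < i → F l = 0) →
        (∀ l, l.length < j → G l = 0) → l.length + 1 < i + j → (consLeft a F * G) l = 0 :=
      fun {F G i j} hF hG hl => by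
        refine ih (i := i - 1) (j := j) (fun k hk => hF _ ?_) hG ?_
        · rw [List.length_cons]
          omega
        · omega
    rw [List.length_cons] at hl
    rw [mul_cons, key hF hG hl, mul_comm, key hG hF (by omega), add_zero]

theorem pow_apply_eq_zero (hF : F [] = 0) (K : ℕ) (l : List ι) (hl : l.length < K) :
    (F ^ K) l = 0 := by
  induction K generalizing l with
  | zero => simp at hl
  | succ K ih =>
    rw [pow_succ]
    refine mul_apply_eq_zero ih (j := 1) (fun l hl => ?_) l hl
    rw [List.length_eq_zero_iff.mp (Nat.lt_one_iff.mp hl), hF]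

/-- Multiplication of a function by the sum of the weights `φ` of the letters, as a linear map. -/
def weightₗ (φ : ι → R) : WordFun ι R →ₗ[R] WordFun ι R where
  toFun F := ⟨fun l => (l.map φ).sum * F l⟩
  map_add' _ _ := ext fun _ => mul_add _ _ _
  map_smul' _ _ := ext fun _ => mul_left_comm _ _ _

theorem weightₗ_apply (φ : ι → R) (F : WordFun ι R) (l : List ι) :
    weightₗ φ F l = (l.map φ).sum * F l := rfl

private theorem consLeft_weightₗ (φ : ι → R) (a : ι) (F : WordFun ι R) :
    consLeft a (weightₗ φ F) = φ a • consLeft a F + weightₗ φ (consLeft a F) := by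
  ext l
  simp [weightₗ_apply, add_mul]

private theorem weightₗ_mul_apply (φ : ι → R) (F G : WordFun ι R) (l : List ι) :
    weightₗ φ (F * G) l = (F * weightₗ φ G) l + (G * weightₗ φ F) l := by
  induction l generalizing F G with
  | nil => simp [weightₗ_apply]
  | cons a l ih =>
    change consLeft a (weightₗ φ (F * G)) l = _
    simp only [consLeft_weightₗ, mul_cons, consLeft_mul, map_add, mul_add, ih, add_apply,
      smul_add, smul_apply, mul_smul_comm, mul_comm (consLeft a _)]
    ring

/-- The derivation multiplying a function by the sum of the weights `φ` of the letters. -/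
def weight (φ : ι → R) : Derivation R (WordFun ι R) (WordFun ι R) :=
  .mk' (weightₗ φ) fun F G => ext fun l => weightₗ_mul_apply φ F G l

theorem weight_apply (φ : ι → R) (F : WordFun ι R) (l : List ι) :
    weight φ F l = (l.map φ).sum * F l := rfl

end ShuffleAlgebra

end WordFun

namespace WordFun

section Symmetrization

variable {ι R : Type*} [CommRing R]

/-- The concatenation product: the sum over all factorizations of a word into two subwords. -/
def concat (F G : WordFun ι R) : WordFun ι R :=
  ⟨fun l => ∑ j ∈ Finset.range (l.length + 1), F (l.take j) * G (l.drop j)⟩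

/-- The sum of the values of `F` over all insertions of the letter `a` into a word. -/
def insertSum (a : ι) (F : WordFun ι R) : WordFun ι R :=
  ⟨fun l => ((l.permutations'Aux a).map F).sum⟩

/-- The sum of the values of `F` over all rearrangements of a word, with multiplicity. -/
def symmetrize (F : WordFun ι R) : WordFun ι R :=
  ⟨fun l => (l.permutations'.map F).sum⟩

theorem concat_apply (F G : WordFun ι R) (l : List ι) :
    concat F G l = ∑ j ∈ Finset.range (l.length + 1), F (l.take j) * G (l.drop j) := rfl

theorem insertSum_apply (a : ι) (F : WordFun ι R) (l : List ι) :
    insertSum a F l = ((l.permutations'Aux a).map F).sum := rfl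

theorem symmetrize_apply (F : WordFun ι R) (l : List ι) :
    symmetrize F l = (l.permutations'.map F).sum := rfl

theorem concat_nil (F G : WordFun ι R) : concat F G [] = F [] * G [] := by
  simp [concat_apply]

theorem concat_cons (F G : WordFun ι R) (a : ι) (l : List ι) :
    concat F G (a :: l) = F [] * G (a :: l) + concat (consLeft a F) G l := by
  rw [concat_apply, List.length_cons, Finset.sum_range_succ', add_comm]
  rfl

theorem consLeft_concat (F G : WordFun ι R) (a : ι) :
    consLeft a (concat F G) = F [] • consLeft a G + concat (consLeft a F) G :=
  ext fun l => concat_cons F G a l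

theorem concat_add_left (F F' G : WordFun ι R) : concat (F + F') G = concat F G + concat F' G :=
  ext fun l => by simp [concat_apply, add_mul, Finset.sum_add_distrib]

theorem insertSum_nil (a : ι) (F : WordFun ι R) : insertSum a F [] = F [a] := by
  simp [insertSum_apply]

theorem insertSum_cons (a b : ι) (F : WordFun ι R) (l : List ι) :
    insertSum a F (b :: l) = F (a :: b :: l) + insertSum a (consLeft b F) l := by
  simp only [insertSum_apply, List.permutations'Aux, List.map_cons, List.map_map, List.sum_cons]
  rfl

theorem consLeft_insertSum (a b : ι) (F : WordFun ι R) :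
    consLeft b (insertSum a F) = consLeft b (consLeft a F) + insertSum a (consLeft b F) :=
  ext fun l => insertSum_cons a b F l

theorem insertSum_add (a : ι) (F G : WordFun ι R) :
    insertSum a (F + G) = insertSum a F + insertSum a G :=
  ext fun _ => List.sum_map_add

theorem insertSum_smul (a : ι) (r : R) (F : WordFun ι R) :
    insertSum a (r • F) = r • insertSum a F :=
  ext fun _ => List.sum_map_mul_left ..

theorem insertSum_concat (a : ι) (F G : WordFun ι R) :
    insertSum a (concat F G) = concat (insertSum a F) G + concat F (insertSum a G) := by
  ext l
  induction l generalizing F G with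
  | nil =>
    simp only [insertSum_nil, concat_cons, concat_nil, add_apply, consLeft_apply]
    ring
  | cons b l ih =>
    simp only [insertSum_cons, insertSum_nil, concat_cons, consLeft_concat, consLeft_insertSum,
      insertSum_add, insertSum_smul, concat_add_left, add_apply, smul_apply, consLeft_apply, ih]
    ring

theorem symmetrize_nil (F : WordFun ι R) : symmetrize F [] = F [] := by
  simp [symmetrize_apply]

theorem symmetrize_cons (F : WordFun ι R) (a : ι) (l : List ι) :
    symmetrize F (a :: l) = symmetrize (insertSum a F) l := by
  simp only [symmetrize_apply, List.permutations', List.flatMap_def, List.map_flatten,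
    List.sum_flatten, List.map_map]
  rfl

theorem symmetrize_add (F G : WordFun ι R) :
    symmetrize (F + G) = symmetrize F + symmetrize G :=
  ext fun _ => List.sum_map_add

theorem symmetrize_concat (F G : WordFun ι R) :
    symmetrize (concat F G) = symmetrize F * symmetrize G := by
  ext l
  induction l generalizing F G with
  | nil => simp [symmetrize_nil, concat_nil]
  | cons a l ih =>
    have consLeft_symmetrize (F : WordFun ι R) :
        consLeft a (symmetrize F) = symmetrize (insertSum a F) :=
      ext fun l => symmetrize_cons F a l
    rw [symmetrize_cons, insertSum_concat, symmetrize_add, add_apply, ih, ih, mul_cons,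
      consLeft_symmetrize, consLeft_symmetrize]

theorem symmetrize_congr {F G : WordFun ι R} {l : List ι} (h : ∀ l', l'.Perm l → F l' = G l') :
    symmetrize F l = symmetrize G l :=
  congrArg List.sum (List.map_congr_left fun l' hl' => h l' (List.mem_permutations'.mp hl'))

theorem symmetrize_apply_of_perm {F : WordFun ι R} {l l' : List ι} (h : l'.Perm l) :
    symmetrize F l' = symmetrize F l :=
  (h.permutations'.map F).sum_eq

theorem symmetrize_smul_apply (r : R) (F : WordFun ι R) (l : List ι) :
    symmetrize (r • F) l = r * symmetrize F l :=
  List.sum_map_mul_left ..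

theorem symmetrize_eq_factorial_mul {F : WordFun ι R} {l : List ι}
    (h : ∀ l', l'.Perm l → F l' = F l) : symmetrize F l = l.length.factorial * F l := by
  have hF : l.permutations'.map F = List.replicate l.length.factorial (F l) := by
    rw [← List.length_permutations, (List.permutations_perm_permutations' l).length_eq,
      ← List.map_const']
    exact List.map_congr_left fun l' hl' => h l' (List.mem_permutations'.mp hl')
  rw [symmetrize_apply, hF, List.sum_replicate, nsmul_eq_mul]

private theorem permutations'_finRange_perm (n : ℕ) :
    (List.finRange n).permutations'.Perm
      ((Finset.univ : Finset (Equiv.Perm (Fin n))).toList.map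
        fun σ : Equiv.Perm (Fin n) => List.ofFn σ) := by
  have nodup_left : (List.finRange n).permutations'.Nodup :=
    (List.permutations_perm_permutations' _).nodup_iff.mp
      (List.nodup_permutations _ (List.nodup_finRange n))
  have nodup_right : ((Finset.univ : Finset (Equiv.Perm (Fin n))).toList.map
      fun σ : Equiv.Perm (Fin n) => List.ofFn σ).Nodup :=
    (Finset.nodup_toList _).map (List.ofFn_injective.comp DFunLike.coe_injective)
  refine (List.perm_ext_iff_of_nodup nodup_left nodup_right).mpr fun l => ?_
  simp only [List.mem_permutations', List.mem_map, Finset.mem_toList, Finset.mem_univ, true_and]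
  constructor
  · intro hl
    have hlen : l.length = n := by simpa using hl.length_eq
    obtain ⟨f, rfl⟩ : ∃ f : Fin n → Fin n, List.ofFn f = l :=
      ⟨fun i => l[i], List.ext_getElem (by simp [hlen]) (by simp)⟩
    have hf : Function.Injective f :=
      List.nodup_ofFn.mp (hl.nodup_iff.mpr (List.nodup_finRange n))
    exact ⟨.ofBijective f (Finite.injective_iff_bijective.mp hf), rfl⟩
  · rintro ⟨σ, rfl⟩
    rw [List.ofFn_eq_map]
    exact σ.map_finRange_perm

theorem symmetrize_ofFn (F : WordFun ι R) {n : ℕ} (m : Fin n → ι) :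
    symmetrize F (List.ofFn m) = ∑ σ : Equiv.Perm (Fin n), F (List.ofFn (m ∘ σ)) := by
  rw [symmetrize_apply, List.ofFn_eq_map, ← List.map_permutations', List.map_map,
    ((permutations'_finRange_perm n).map _).sum_eq, List.map_map, ← Finset.sum_map_toList]
  simp [Function.comp_def, List.ofFn_eq_map]

end Symmetrization

end WordFun

section Recursions

variable {η : ℝ} {ψ χ : ℕ → ℝ}

theorem hFun_zero : hFun 0 η ψ = 1 := by rw [hFun]

theorem hFun_succ (J : ℕ) : hFun (J + 1) η ψ = (η - ∑ i ∈ Finset.range (J + 1), ψ i)⁻¹ *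
    ∑ j ∈ Finset.range (J + 1), hFun j η ψ * hFun (J - j) η fun i => ψ (i + j) := by
  rw [hFun, Finset.sum_attach (Finset.range (J + 1))
    fun j => hFun j η ψ * hFun (J - j) η fun i => ψ (i + j)]

theorem hFun_congr {J : ℕ} (h : ∀ i < J, ψ i = χ i) : hFun J η ψ = hFun J η χ := by
  induction J using Nat.strong_induction_on generalizing ψ χ with
  | _ J ih =>
    rcases J with _ | J
    · rw [hFun_zero, hFun_zero]
    · rw [hFun_succ, hFun_succ, Finset.sum_congr rfl fun i hi => h i (Finset.mem_range.mp hi)]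
      congr 1
      refine Finset.sum_congr rfl fun j hj => ?_
      rw [Finset.mem_range] at hj
      rw [ih j hj fun i hi => h i (by omega),
        ih (J - j) (by omega) fun i hi => h (i + j) (by omega)]

theorem fAux_zero (K : ℤ) : fAux 0 K η ψ = 0 := by rw [fAux]

theorem fAux_one (K : ℤ) :
    fAux 1 K η ψ = if K = 0 then -η⁻¹ else if K = 1 then η⁻¹ else 0 := by
  rw [fAux]

theorem fAux_add_two (J : ℕ) (K : ℤ) :
    fAux (J + 2) K η ψ = if 0 ≤ K ∧ K ≤ (J : ℤ) + 2 then
      η⁻¹ * ∑ a ∈ ({-1, 0, 1} : Finset ℤ), omegaCoef a *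
        (((J + 2).factorial : ℝ)⁻¹ * ∑ σ : Equiv.Perm (Fin (J + 2)),
          gAux (J + 1) (K + a) η fun i => if h : i < J + 2 then ψ (σ ⟨i, h⟩) else ψ i)
    else 0 := by
  rw [fAux]
  rfl

theorem fAux_eq_zero {J : ℕ} {K : ℤ} (h : K < 0 ∨ (J : ℤ) < K) : fAux J K η ψ = 0 := by
  rcases J with _ | _ | J
  · exact fAux_zero K
  · rw [fAux_one, if_neg (by omega), if_neg (by push_cast at h; omega)]
  · rw [fAux_add_two, if_neg (by push_cast at h; omega)]

theorem gAux_eq_zero {J : ℕ} {K : ℤ} (h : K ≤ 0 ∨ (J : ℤ) < K) : gAux J K η ψ = 0 := by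
  rcases eq_or_ne K 0 with rfl | h0
  · simp [gAux]
  · rw [gAux, fAux_eq_zero (by omega), mul_zero]

theorem gAux_congr_of_fAux {J : ℕ} {K : ℤ} (h : ∀ i < J, ψ i = χ i)
    (hf : fAux J K η ψ = fAux J K η χ) : gAux J K η ψ = gAux J K η χ := by
  rw [gAux, gAux, hf, Finset.sum_congr rfl fun i hi => h i (Finset.mem_range.mp hi)]

theorem fAux_congr {J : ℕ} {K : ℤ} (h : ∀ i < J, ψ i = χ i) : fAux J K η ψ = fAux J K η χ := by
  rcases J with _ | J
  · rw [fAux_zero, fAux_zero]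
  induction J generalizing K ψ χ with
  | zero => rw [fAux_one, fAux_one]
  | succ J ih =>
    have hg (σ : Equiv.Perm (Fin (J + 2))) (a : ℤ) :
        gAux (J + 1) (K + a) η (fun i => if h : i < J + 2 then ψ (σ ⟨i, h⟩) else ψ i) =
          gAux (J + 1) (K + a) η fun i => if h : i < J + 2 then χ (σ ⟨i, h⟩) else χ i := by
      have hψχ : ∀ i < J + 1, (if h : i < J + 2 then ψ (σ ⟨i, h⟩) else ψ i) =
          if h : i < J + 2 then χ (σ ⟨i, h⟩) else χ i := fun i hi => by
        rw [dif_pos (by omega), dif_pos (by omega), h _ (Fin.is_lt _)]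
      exact gAux_congr_of_fAux hψχ (ih hψχ)
    simp only [fAux_add_two, hg]

theorem gAux_congr {J : ℕ} {K : ℤ} (h : ∀ i < J, ψ i = χ i) : gAux J K η ψ = gAux J K η χ :=
  gAux_congr_of_fAux h (fAux_congr h)

end Recursions

namespace WordFun

variable {ι : Type*} {η : ℝ} {φ : ι → ℝ}

section Frequencies

/-- The sequence of frequencies of the letters of a word, padded by zeros, at which the functions
`hFun`, `fAux` and `gAux` are evaluated. -/
def freq (φ : ι → ℝ) (l : List ι) : ℕ → ℝ := fun n => (l.map φ).getD n 0

theorem freq_eq_getElem {l : List ι} {i : ℕ} (hi : i < l.length) : freq φ l i = φ l[i] := by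
  simp [freq, hi]

theorem padFin_eq_freq {φ : ℕ → ℝ} {J : ℕ} (m : Fin J → ℕ) :
    padFin J φ m = freq φ (List.ofFn m) := by
  ext i
  by_cases hi : i < J <;> simp [padFin, freq, hi]

theorem sum_range_freq (l : List ι) :
    ∑ i ∈ Finset.range l.length, freq φ l i = (l.map φ).sum := by
  rw [Finset.sum_range, ← List.sum_ofFn]
  congr 1
  exact List.ext_getElem (by simp) fun i _ _ => by simp [freq]

theorem freq_drop (l : List ι) (j : ℕ) : freq φ (l.drop j) = fun i => freq φ l (i + j) := by
  ext i
  simp [freq, List.getD_eq_getElem?_getD, add_comm]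

/-- The functions `h_J` as a function on words, normalized by `η ^ (-J)` so that the factor `η⁻¹`
appears in its recursion exactly as in that of `f_{J,K}`. -/
noncomputable def hWord (η : ℝ) (φ : ι → ℝ) : WordFun ι ℝ :=
  ⟨fun l => η⁻¹ ^ l.length * hFun l.length η (freq φ l)⟩

/-- The functions `f_{J,K}` as a function on words. -/
noncomputable def fWord (η : ℝ) (φ : ι → ℝ) (K : ℤ) : WordFun ι ℝ :=
  ⟨fun l => fAux l.length K η (freq φ l)⟩

/-- The functions `g_{J,K}` as a function on words. -/
noncomputable def gWord (η : ℝ) (φ : ι → ℝ) (K : ℤ) : WordFun ι ℝ :=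
  ⟨fun l => gAux l.length K η (freq φ l)⟩

theorem hWord_apply (l : List ι) :
    hWord η φ l = η⁻¹ ^ l.length * hFun l.length η (freq φ l) := rfl

theorem fWord_apply (K : ℤ) (l : List ι) : fWord η φ K l = fAux l.length K η (freq φ l) := rfl

theorem gWord_apply (K : ℤ) (l : List ι) : gWord η φ K l = gAux l.length K η (freq φ l) := rfl

theorem gWord_eq (K : ℤ) (l : List ι) :
    gWord η φ K l = (-2 * K) / (K * η - (l.map φ).sum) * fWord η φ K l := by
  rw [gWord_apply, gAux, sum_range_freq, fWord_apply]

theorem hWord_nil : hWord η φ [] = 1 := by simp [hWord_apply, hFun_zero]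

theorem hWord_append_singleton (l : List ι) (a : ι) :
    hWord η φ (l ++ [a]) = (η - ((l ++ [a]).map φ).sum)⁻¹ *
      (η⁻¹ * concat (hWord η φ) (hWord η φ) l) := by
  have freq_append {i : ℕ} (hi : i < l.length) : freq φ (l ++ [a]) i = freq φ l i := by
    rw [freq_eq_getElem hi, freq_eq_getElem (by simp; omega), List.getElem_append_left]
  have hterm : ∀ j ∈ Finset.range (l.length + 1), η⁻¹ ^ l.length *
      (hFun j η (freq φ (l ++ [a])) * hFun (l.length - j) η fun i => freq φ (l ++ [a]) (i + j)) =
      hWord η φ (l.take j) * hWord η φ (l.drop j) := fun j hj => by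
    have hj : j ≤ l.length := Nat.lt_succ_iff.mp (Finset.mem_range.mp hj)
    have htake : hFun j η (freq φ (l ++ [a])) = hFun j η (freq φ (l.take j)) :=
      hFun_congr fun i hi => by
        rw [freq_append (by omega), freq_eq_getElem (by omega), freq_eq_getElem (by simp; omega),
          List.getElem_take]
    have hdrop : (hFun (l.length - j) η fun i => freq φ (l ++ [a]) (i + j)) =
        hFun (l.length - j) η (freq φ (l.drop j)) :=
      hFun_congr fun i hi => by rw [freq_append (by omega), freq_drop]
    rw [hWord_apply, hWord_apply, htake, hdrop, List.length_take_of_le hj, List.length_drop,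
      mul_mul_mul_comm, ← pow_add, Nat.add_sub_cancel' hj]
  rw [hWord_apply, ← sum_range_freq, List.length_append, List.length_singleton, hFun_succ,
    concat_apply, ← Finset.sum_congr rfl hterm, ← Finset.mul_sum, pow_succ]
  ring

end Frequencies

end WordFun

namespace WordFun

variable {ι : Type*} {η : ℝ} {φ : ι → ℝ}

/-- The indicator function of the words consisting of a single letter. -/
def letter (ι : Type*) : WordFun ι ℝ := ⟨fun l => if l.length = 1 then 1 else 0⟩

theorem letter_apply (l : List ι) :
    letter ι l = if l.length = 1 then 1 else 0 := rfl

theorem symmetrize_letter : symmetrize (letter ι) = letter ι := by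
  ext l
  rw [symmetrize_eq_factorial_mul fun l' hl => by rw [letter_apply, letter_apply, hl.length_eq],
    letter_apply]
  split_ifs with hl <;> simp [hl]

theorem concat_letter_append_singleton (F : WordFun ι ℝ) (l : List ι) (a : ι) :
    concat F (letter ι) (l ++ [a]) = F l := by
  rw [concat_apply, Finset.sum_eq_single l.length]
  · simp [letter_apply]
  · intro j hj hne
    rw [Finset.mem_range, List.length_append, List.length_singleton] at hj
    rw [letter_apply, if_neg (by simp; omega), mul_zero]
  · simp

theorem letter_mul_nil (F : WordFun ι ℝ) : (letter ι * F) [] = 0 := by simp [letter_apply]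

theorem letter_mul_singleton (F : WordFun ι ℝ) (a : ι) : (letter ι * F) [a] = F [] := by
  simp [mul_cons, letter_apply]

theorem letter_mul_congr {F G : WordFun ι ℝ} {l : List ι}
    (h : ∀ l', l'.length < l.length → F l' = G l') : (letter ι * F) l = (letter ι * G) l := by
  rw [← sub_eq_zero, ← sub_apply, ← mul_sub]
  refine mul_apply_eq_zero (i := 1) (j := l.length) (fun l' hl' => ?_) (fun l' hl' => ?_) l
    (by omega)
  · rw [letter_apply, if_neg (by omega)]
  · rw [sub_apply, h l' hl', sub_self]

theorem factorial_mul_fWord {K : ℤ} (hK : 0 ≤ K) {l : List ι} (hKl : K ≤ l.length)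
    (hl : 2 ≤ l.length) :
    l.length.factorial * fWord η φ K l = η⁻¹ * ∑ a ∈ ({-1, 0, 1} : Finset ℤ),
      omegaCoef a * symmetrize (concat (gWord η φ (K + a)) (letter ι)) l := by
  obtain ⟨J, m, rfl⟩ : ∃ (J : ℕ) (m : Fin (J + 2) → ι), List.ofFn m = l :=
    ⟨l.length - 2, fun i => l[i], List.ext_getElem (by rw [List.length_ofFn]; omega)
      fun i _ _ => by rw [List.getElem_ofFn]; rfl⟩
  have hg (a : ℤ) (σ : Equiv.Perm (Fin (J + 2))) :
      (gAux (J + 1) (K + a) η fun i => if h : i < J + 2 then freq φ (List.ofFn m) (σ ⟨i, h⟩)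
        else freq φ (List.ofFn m) i) =
      concat (gWord η φ (K + a)) (letter ι) (List.ofFn (m ∘ σ)) := by
    rw [List.ofFn_succ' (m ∘ σ), List.concat_eq_append, concat_letter_append_singleton,
      gWord_apply, List.length_ofFn]
    refine gAux_congr fun i hi => ?_
    rw [dif_pos (by omega), freq_eq_getElem (by rw [List.length_ofFn]; exact Fin.is_lt _),
      freq_eq_getElem (by simpa using hi)]
    simp only [List.getElem_ofFn]
    rfl
  have hfac : ((J + 2).factorial : ℝ) ≠ 0 := Nat.cast_ne_zero.mpr (Nat.factorial_ne_zero _)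
  rw [List.length_ofFn] at hKl
  rw [fWord_apply, List.length_ofFn, fAux_add_two, if_pos ⟨hK, by exact_mod_cast hKl⟩]
  simp only [hg, symmetrize_ofFn]
  simp only [mul_left_comm _ (_⁻¹) (∑ _ : Equiv.Perm (Fin (J + 2)), _), ← Finset.mul_sum]
  field_simp

theorem fWord_eq_of_perm (K : ℤ) {l l' : List ι} (h : l'.Perm l) :
    fWord η φ K l' = fWord η φ K l := by
  by_cases hK : 0 ≤ K ∧ K ≤ l.length
  · rcases lt_or_ge l.length 2 with hl | hl
    · rw [fWord_apply, fWord_apply, h.length_eq]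
      interval_cases l.length
      · rw [fAux_zero, fAux_zero]
      · rw [fAux_one, fAux_one]
    · have hfac : (l.length.factorial : ℝ) ≠ 0 := Nat.cast_ne_zero.mpr (Nat.factorial_ne_zero _)
      refine mul_left_cancel₀ hfac ?_
      rw [factorial_mul_fWord hK.1 hK.2 hl, ← h.length_eq,
        factorial_mul_fWord hK.1 (by rw [h.length_eq]; exact hK.2) (by rwa [h.length_eq])]
      simp only [symmetrize_apply_of_perm h]
  · rw [fWord_apply, fWord_apply, h.length_eq, fAux_eq_zero (by omega), fAux_eq_zero (by omega)]

theorem symmetrize_gWord (K : ℤ) (l : List ι) :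
    symmetrize (gWord η φ K) l = l.length.factorial * gWord η φ K l :=
  symmetrize_eq_factorial_mul fun l' hl => by
    rw [gWord_eq, gWord_eq, fWord_eq_of_perm K hl, (hl.map φ).sum_eq]

/-- The functions `J! g_{J,K} / 2` on words, with the unit for `K = 0`, which is the choice that
makes the recursion `mul_harmonic_succ` hold from words of length one on. -/
noncomputable def harmonic (η : ℝ) (φ : ι → ℝ) : ℕ → WordFun ι ℝ
  | 0 => 1
  | K + 1 => (2 : ℝ)⁻¹ • symmetrize (gWord η φ (K + 1 : ℕ))

theorem harmonic_succ_apply (K : ℕ) (l : List ι) :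
    harmonic η φ (K + 1) l = 2⁻¹ * (l.length.factorial * gWord η φ (K + 1 : ℕ) l) := by
  rw [harmonic, smul_apply, symmetrize_gWord]

theorem letter_mul_harmonic (K : ℕ) {l : List ι} (hl : 2 ≤ l.length) :
    (letter ι * harmonic η φ K) l = 2⁻¹ * symmetrize (concat (gWord η φ K) (letter ι)) l := by
  rw [symmetrize_concat, symmetrize_letter]
  rcases K with _ | K
  · have hg : symmetrize (gWord η φ (0 : ℕ)) = 0 := ext fun l => by
      simp [symmetrize_gWord, gWord_eq]
    rw [harmonic, mul_one, letter_apply, if_neg (by omega), hg, zero_mul, zero_apply, mul_zero]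
  · rw [harmonic, mul_smul_comm, smul_apply, mul_comm (letter ι)]

theorem mul_harmonic_succ (K : ℕ) {l : List ι} (hK : K + 1 ≤ l.length)
    (hres : (K + 1) * η ≠ (l.map φ).sum) :
    ((K + 1) * η - (l.map φ).sum) * harmonic η φ (K + 1) l = -((K + 1) * η⁻¹) *
      (letter ι * (harmonic η φ K - harmonic η φ (K + 1) -
        (harmonic η φ (K + 1) - harmonic η φ (K + 2)))) l := by
  have hne : (K + 1) * η - (l.map φ).sum ≠ 0 := sub_ne_zero.mpr hres
  have hf : ((K + 1) * η - (l.map φ).sum) * harmonic η φ (K + 1) l =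
      -(K + 1) * (l.length.factorial * fWord η φ (K + 1 : ℕ) l) := by
    rw [harmonic_succ_apply, gWord_eq]
    push_cast
    field_simp
  rw [hf]
  rcases lt_or_ge l.length 2 with hl | hl
  · obtain ⟨a, rfl⟩ := List.length_eq_one_iff.mp (show l.length = 1 by omega)
    obtain rfl : K = 0 := by simpa using hK
    have harmonic_nil (K : ℕ) : harmonic η φ (K + 1) [] = 0 := by
      rw [harmonic_succ_apply, gWord_eq, fWord_apply, List.length_nil, fAux_zero, mul_zero,
        mul_zero, mul_zero]
    have harmonic_zero_nil : harmonic η φ 0 [] = 1 := one_nil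
    rw [letter_mul_singleton, fWord_apply, List.length_singleton, fAux_one]
    simp only [sub_apply, harmonic_nil, harmonic_zero_nil]
    simp
  · rw [factorial_mul_fWord (by omega) (by exact_mod_cast hK) hl]
    simp only [mul_sub, sub_apply, letter_mul_harmonic _ hl]
    rw [Finset.sum_insert (by decide), Finset.sum_insert (by decide), Finset.sum_singleton]
    have hpred : ((K + 1 : ℕ) : ℤ) + -1 = (K : ℕ) := by push_cast; ring
    have hsucc : ((K + 1 : ℕ) : ℤ) + 1 = (K + 2 : ℕ) := by push_cast; ring
    rw [hpred, hsucc, add_zero]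
    simp only [omegaCoef]
    norm_num
    ring

end WordFun

namespace WordFun

variable {ι : Type*} {η : ℝ} {φ : ι → ℝ}

/-- The solution `U` of the Riccati equation `D U = η U + η⁻¹ (1 - U)² · letter` in the shuffle
algebra that vanishes on the empty word, where `D` is the derivation `weight φ`. -/
noncomputable def riccatiSol (η : ℝ) (φ : ι → ℝ) : WordFun ι ℝ := 1 - symmetrize (hWord η φ)

theorem riccatiSol_nil : riccatiSol η φ [] = 0 := by
  rw [riccatiSol, sub_apply, one_nil, symmetrize_nil, hWord_nil, sub_self]

theorem mul_symmetrize_hWord {l : List ι} (hl : l ≠ []) (hres : η ≠ (l.map φ).sum) :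
    (η - (l.map φ).sum) * symmetrize (hWord η φ) l =
      η⁻¹ * (letter ι * symmetrize (hWord η φ) ^ 2) l := by
  rw [pow_two, ← symmetrize_concat, mul_comm (letter ι), ← symmetrize_letter,
    ← symmetrize_concat, ← symmetrize_smul_apply, ← symmetrize_smul_apply]
  refine symmetrize_congr fun l' hl' => ?_
  have hne : l' ≠ [] := fun h => hl (List.nil_perm.mp (h ▸ hl'))
  rw [← (hl'.map φ).sum_eq] at hres ⊢
  obtain ⟨w, a, rfl⟩ := l'.eq_nil_or_concat.resolve_left hne
  rw [List.concat_eq_append] at hres ⊢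
  rw [smul_apply, smul_apply, concat_letter_append_singleton, hWord_append_singleton,
    mul_inv_cancel_left₀ (sub_ne_zero.mpr hres)]

theorem riccatiSol_eq {l : List ι} (hres : l ≠ [] → η ≠ (l.map φ).sum) :
    (η • riccatiSol η φ - weight φ (riccatiSol η φ) +
      η⁻¹ • (letter ι * (1 - riccatiSol η φ) ^ 2) : WordFun ι ℝ) l = 0 := by
  rw [add_apply, sub_apply, smul_apply, smul_apply, weight_apply, ← sub_mul]
  rcases eq_or_ne l [] with rfl | hl
  · rw [letter_mul_nil, riccatiSol_nil, mul_zero, mul_zero, add_zero]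
  · have hone : (1 : WordFun ι ℝ) l = 0 := if_neg (by simpa using hl)
    rw [riccatiSol, sub_sub_cancel, ← mul_symmetrize_hWord hl (hres hl), sub_apply, hone]
    ring

theorem mul_riccatiSol_pow_succ (K : ℕ) {l : List ι}
    (hres : ∀ l' : List ι, l'.length ≤ l.length → l' ≠ [] → η ≠ (l'.map φ).sum) :
    ((K + 1) * η - (l.map φ).sum) * (riccatiSol η φ ^ (K + 1)) l = -((K + 1) * η⁻¹) *
      (letter ι * (riccatiSol η φ ^ K - riccatiSol η φ ^ (K + 1) -
        (riccatiSol η φ ^ (K + 1) - riccatiSol η φ ^ (K + 2)))) l := by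
  set U := riccatiSol η φ
  set ρ := η • U - weight φ U + η⁻¹ • (letter ι * (1 - U) ^ 2) with hρ
  have hUρ : (U ^ K * ρ) l = 0 :=
    mul_apply_eq_zero (i := 0) (j := l.length + 1) (fun _ h => absurd h (Nat.not_lt_zero _))
      (fun l' hl' => riccatiSol_eq (hres l' (Nat.lt_succ_iff.mp hl'))) l (by omega)
  have key : ((K + 1 : ℝ) * η) • U ^ (K + 1) - weight φ (U ^ (K + 1)) + ((K + 1 : ℝ) * η⁻¹) •
      (letter ι * (U ^ K - U ^ (K + 1) - (U ^ (K + 1) - U ^ (K + 2)))) =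
      (K + 1 : ℝ) • (U ^ K * ρ) := by
    rw [hρ, Derivation.leibniz_pow, Nat.add_sub_cancel, smul_eq_mul, nsmul_eq_mul]
    simp only [Algebra.smul_def, map_mul, map_add, map_one, map_natCast]
    push_cast
    ring
  have := DFunLike.congr_fun key l
  rw [smul_apply, hUρ, add_apply, sub_apply, smul_apply, smul_apply, weight_apply] at this
  linear_combination this

/-- The absence of small divisors on words of length at most `n`: none of the denominators of
`h_J` and `g_{J,K}`, for `1 ≤ K ≤ J ≤ n`, vanishes. -/
def NonresonantUpTo (η : ℝ) (φ : ι → ℝ) (n : ℕ) : Prop :=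
  ∀ (K : ℕ) (l : List ι), 1 ≤ K → K ≤ l.length → l.length ≤ n → K * η ≠ (l.map φ).sum

theorem harmonic_eq_riccatiSol_pow {n : ℕ} (hres : NonresonantUpTo η φ n) (K : ℕ) {l : List ι}
    (hl : l.length ≤ n) : harmonic η φ K l = (riccatiSol η φ ^ K) l := by
  induction hJ : l.length using Nat.strong_induction_on generalizing K l with
  | _ J ih =>
    rcases K with _ | K
    · rw [harmonic, pow_zero]
    rcases lt_or_ge l.length (K + 1) with hK | hK
    · rw [pow_apply_eq_zero riccatiSol_nil _ _ hK, harmonic_succ_apply, gWord_apply,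
        gAux_eq_zero (by omega), mul_zero, mul_zero]
    have hres_l : ((K : ℝ) + 1) * η ≠ (l.map φ).sum := by
      exact_mod_cast hres (K + 1) l (by omega) hK hl
    refine mul_left_cancel₀ (sub_ne_zero.mpr hres_l) ?_
    rw [mul_harmonic_succ K hK hres_l, mul_riccatiSol_pow_succ K fun l' hl' hne => by
      simpa using hres 1 l' le_rfl (List.length_pos_iff.mpr hne) (hl'.trans hl)]
    congr 1
    refine letter_mul_congr fun l' hl' => ?_
    have ih' (K : ℕ) := ih l'.length (by omega) K (by omega) rfl
    simp only [sub_apply, ih']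

theorem factorial_mul_gWord {n : ℕ} (hres : NonresonantUpTo η φ n) {K : ℕ} (hK : 1 ≤ K)
    {l : List ι} (hl : l.length ≤ n) :
    l.length.factorial * gWord η φ K l = 2 * (riccatiSol η φ ^ K) l := by
  obtain ⟨K, rfl⟩ := Nat.exists_eq_add_of_le' hK
  rw [← harmonic_eq_riccatiSol_pow hres (K + 1) hl, harmonic_succ_apply]
  ring

end WordFun

theorem enorm_le_enorm_factorial_mul (n : ℕ) (x : ℝ) : ‖x‖ₑ ≤ ‖(n.factorial : ℝ) * x‖ₑ := by
  rw [enorm_mul, Real.enorm_natCast]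
  exact le_mul_of_one_le_left' (Nat.one_le_cast.mpr (Nat.factorial_pos n))

namespace WordFun

variable {ι : Type*}

/-- The contribution of the words of length `J` to the `ℓ¹` norm of a function on words, where a
word is weighted by the product of the weights `w` of its letters. -/
noncomputable def wordNorm (w : ι → ℝ≥0∞) (J : ℕ) (F : WordFun ι ℝ) : ℝ≥0∞ :=
  ∑' m : Fin J → ι, (∏ i, w (m i)) * ‖F (List.ofFn m)‖ₑ

variable {w : ι → ℝ≥0∞} {F G : WordFun ι ℝ}

theorem wordNorm_zero : wordNorm w 0 F = ‖F []‖ₑ := by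
  simp [wordNorm]

theorem wordNorm_succ (J : ℕ) :
    wordNorm w (J + 1) F = ∑' a, w a * wordNorm w J (consLeft a F) := by
  rw [wordNorm, ← (Fin.consEquiv fun _ => ι).tsum_eq, ENNReal.tsum_prod']
  refine tsum_congr fun a => ?_
  rw [wordNorm, ← ENNReal.tsum_mul_left]
  refine tsum_congr fun m => ?_
  simp [Fin.consEquiv, Fin.prod_univ_succ, List.ofFn_succ, mul_assoc]

theorem wordNorm_le_mul {J : ℕ} (C : ℝ≥0∞)
    (h : ∀ m : Fin J → ι, ‖F (List.ofFn m)‖ₑ ≤ C * ‖G (List.ofFn m)‖ₑ) :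
    wordNorm w J F ≤ C * wordNorm w J G := by
  rw [wordNorm, wordNorm, ← ENNReal.tsum_mul_left]
  refine ENNReal.tsum_le_tsum fun m => ?_
  rw [mul_left_comm]
  gcongr
  exact h m

theorem wordNorm_le_add {H : WordFun ι ℝ} (J : ℕ) (h : ∀ l, ‖F l‖ₑ ≤ ‖G l‖ₑ + ‖H l‖ₑ) :
    wordNorm w J F ≤ wordNorm w J G + wordNorm w J H := by
  rw [wordNorm, wordNorm, wordNorm, ← ENNReal.tsum_add]
  refine ENNReal.tsum_le_tsum fun m => ?_
  rw [← mul_add]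
  gcongr
  exact h _

theorem wordNorm_mul_le (J : ℕ) :
    wordNorm w J (F * G) ≤ ∑ ij ∈ Finset.HasAntidiagonal.antidiagonal J,
      (J.choose ij.1 : ℝ≥0∞) * (wordNorm w ij.1 F * wordNorm w ij.2 G) := by
  induction J generalizing F G with
  | zero => simp [wordNorm_zero, enorm_mul]
  | succ J ih =>
    rw [wordNorm_succ, Finset.sum_antidiagonal_choose_succ_mul
      fun i j => wordNorm w i F * wordNorm w j G]
    calc ∑' a, w a * wordNorm w J (consLeft a (F * G))
        ≤ ∑' a, ∑ ij ∈ Finset.HasAntidiagonal.antidiagonal J, (J.choose ij.1 : ℝ≥0∞) *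
            (wordNorm w ij.1 F * (w a * wordNorm w ij.2 (consLeft a G)) +
              w a * wordNorm w ij.1 (consLeft a F) * wordNorm w ij.2 G) := by
          refine ENNReal.tsum_le_tsum fun a => ?_
          rw [consLeft_mul, add_comm]
          refine (mul_le_mul_right ((wordNorm_le_add J fun _ => enorm_add_le _ _).trans
            (add_le_add ih ih)) _).trans_eq ?_
          rw [← Finset.sum_add_distrib, Finset.mul_sum]
          exact Finset.sum_congr rfl fun ij _ => by ring
      _ = ∑ ij ∈ Finset.HasAntidiagonal.antidiagonal J, (J.choose ij.1 : ℝ≥0∞) *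
            (wordNorm w ij.1 F * wordNorm w (ij.2 + 1) G +
              wordNorm w (ij.1 + 1) F * wordNorm w ij.2 G) := by
          rw [Summable.tsum_finsetSum fun _ _ => ENNReal.summable]
          simp only [ENNReal.tsum_mul_left, ENNReal.tsum_mul_right, ENNReal.tsum_add,
            ← wordNorm_succ]
      _ = _ := by
          simp only [mul_add, Finset.sum_add_distrib]
          congr 1
          refine Finset.sum_congr rfl fun ij hij => ?_
          rw [Nat.choose_symm_of_eq_add (Finset.HasAntidiagonal.mem_antidiagonal.mp hij).symm]

theorem wordNorm_one_ne_top (J : ℕ) : wordNorm w J 1 ≠ ⊤ := by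
  rcases J with _ | J
  · simp [wordNorm_zero]
  · have h_one (m : Fin (J + 1) → ι) : (1 : WordFun ι ℝ) (List.ofFn m) = 0 := if_neg (by simp)
    simp only [wordNorm, h_one, enorm_zero, mul_zero, tsum_zero, ne_eq, ENNReal.zero_ne_top,
      not_false_eq_true]

theorem wordNorm_pow_ne_top {n : ℕ} (hF : ∀ j ≤ n, wordNorm w j F ≠ ⊤) (K : ℕ) :
    ∀ j ≤ n, wordNorm w j (F ^ K) ≠ ⊤ := by
  induction K with
  | zero => exact fun j _ => by rw [pow_zero]; exact wordNorm_one_ne_top j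
  | succ K ih =>
    intro j hj
    rw [pow_succ]
    refine ne_top_of_le_ne_top (ENNReal.sum_ne_top.mpr fun ab hab => ?_) (wordNorm_mul_le j)
    have hab := Finset.HasAntidiagonal.mem_antidiagonal.mp hab
    exact ENNReal.mul_ne_top (ENNReal.natCast_ne_top _)
      (ENNReal.mul_ne_top (ih _ (by omega)) (hF _ (by omega)))

theorem wordNorm_symmetrize_le (J : ℕ) :
    wordNorm w J (symmetrize F) ≤ J.factorial * wordNorm w J F := by
  have hperm (σ : Equiv.Perm (Fin J)) :
      ∑' m : Fin J → ι, (∏ i, w (m i)) * ‖F (List.ofFn (m ∘ σ))‖ₑ = wordNorm w J F := by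
    rw [wordNorm, ← (σ.arrowCongr (Equiv.refl ι)).tsum_eq]
    refine tsum_congr fun m => ?_
    rw [← Equiv.prod_comp σ]
    simp [Function.comp_def]
  calc wordNorm w J (symmetrize F)
      ≤ ∑' m : Fin J → ι, ∑ σ : Equiv.Perm (Fin J),
          (∏ i, w (m i)) * ‖F (List.ofFn (m ∘ σ))‖ₑ := by
        refine ENNReal.tsum_le_tsum fun m => ?_
        rw [symmetrize_ofFn, ← Finset.mul_sum]
        gcongr
        exact enorm_sum_le _ _
    _ = J.factorial * wordNorm w J F := by
        rw [Summable.tsum_finsetSum fun _ _ => ENNReal.summable]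
        simp [hperm, Fintype.card_perm]

theorem wordNorm_riccatiSol_ne_top {η : ℝ} {φ : ι → ℝ} {J : ℕ}
    (hh : wordNorm w J (hWord η φ) ≠ ⊤) : wordNorm w J (riccatiSol η φ) ≠ ⊤ :=
  ne_top_of_le_ne_top (ENNReal.add_ne_top.mpr ⟨wordNorm_one_ne_top J, ne_top_of_le_ne_top
    (ENNReal.mul_ne_top (ENNReal.natCast_ne_top _) hh) (wordNorm_symmetrize_le J)⟩)
    (wordNorm_le_add J fun _ => enorm_sub_le)

theorem gWord_eq_zero {η : ℝ} {φ : ι → ℝ} {K : ℤ} {l : List ι}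
    (h : K ≤ 0 ∨ (l.length : ℤ) < K) : gWord η φ K l = 0 := by
  rw [gWord_apply, gAux_eq_zero h]

theorem wordNorm_gWord_ne_top {η : ℝ} {φ : ι → ℝ} {J : ℕ} (hres : NonresonantUpTo η φ J)
    (hh : ∀ j ≤ J, wordNorm w j (hWord η φ) ≠ ⊤) (K : ℤ) : wordNorm w J (gWord η φ K) ≠ ⊤ := by
  rcases le_or_gt K 0 with hK | hK
  · simp [wordNorm, gWord_eq_zero (Or.inl hK)]
  lift K to ℕ using hK.le
  have hU := wordNorm_pow_ne_top (fun j hj => wordNorm_riccatiSol_ne_top (hh j hj)) K J le_rfl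
  refine ne_top_of_le_ne_top (ENNReal.mul_ne_top enorm_ne_top hU)
    (wordNorm_le_mul ‖(2 : ℝ)‖ₑ fun m => ?_)
  have hfac := factorial_mul_gWord hres (K := K) (l := List.ofFn m) (by omega)
    (List.length_ofFn.le)
  rw [List.length_ofFn] at hfac
  calc ‖gWord η φ K (List.ofFn m)‖ₑ
      ≤ ‖(J.factorial : ℝ) * gWord η φ K (List.ofFn m)‖ₑ :=
        enorm_le_enorm_factorial_mul J _
    _ = ‖(2 : ℝ)‖ₑ * ‖(riccatiSol η φ ^ K) (List.ofFn m)‖ₑ := by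
        rw [hfac, enorm_mul]

end WordFun

theorem enorm_prod {R κ : Type*} [NormedCommRing R] [NormMulClass R] [NormOneClass R]
    (s : Finset κ) (f : κ → R) : ‖∏ i ∈ s, f i‖ₑ = ∏ i ∈ s, ‖f i‖ₑ := by
  simp [enorm_eq_nnnorm]

theorem enorm_complex_ofReal (r : ℝ) : ‖(r : ℂ)‖ₑ = ‖r‖ₑ := by
  simp [enorm_eq_nnnorm]

namespace WordFun

variable {ι : Type*} {β : ι → ℂ} {F : WordFun ι ℝ} {J : ℕ}

theorem wordNorm_le_pow_mul {w w' : ι → ℝ≥0∞} {M : ℝ≥0∞} (h : ∀ k, w' k ≤ M * w k) (J : ℕ) :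
    wordNorm w' J F ≤ M ^ J * wordNorm w J F := by
  rw [wordNorm, wordNorm, ← ENNReal.tsum_mul_left]
  refine ENNReal.tsum_le_tsum fun m => ?_
  rw [← mul_assoc]
  gcongr
  calc ∏ i, w' (m i) ≤ ∏ i, M * w (m i) := Finset.prod_le_prod' fun i _ => h (m i)
    _ = M ^ J * ∏ i, w (m i) := by simp [Finset.prod_mul_distrib]

theorem wordNorm_concat_letter (w : ι → ℝ≥0∞) (J : ℕ) :
    wordNorm w (J + 1) (concat F (letter ι)) = wordNorm w J F * ∑' k, w k := by
  rw [wordNorm, ← (Fin.snocEquiv fun _ => ι).tsum_eq, ENNReal.tsum_prod', mul_comm,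
    ← ENNReal.tsum_mul_right]
  refine tsum_congr fun k => ?_
  rw [wordNorm, ← ENNReal.tsum_mul_left]
  refine tsum_congr fun m => ?_
  simp only [Fin.snocEquiv, Equiv.coe_fn_mk, Fin.prod_univ_castSucc, Fin.snoc_castSucc,
    Fin.snoc_last, List.ofFn_succ', concat_letter_append_singleton, List.concat_eq_append]
  ring

/-- The sum of `F` over the words of length `J`, where a word is weighted by the product of the
coefficients `β` of its letters. -/
noncomputable def wordSum (β : ι → ℂ) (J : ℕ) (F : WordFun ι ℝ) : ℂ :=
  ∑' m : Fin J → ι, F (List.ofFn m) * ∏ i, β (m i)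

theorem summable_wordSum (hF : wordNorm (fun k => ‖β k‖ₑ) J F ≠ ⊤) :
    Summable fun m : Fin J → ι => (F (List.ofFn m) : ℂ) * ∏ i, β (m i) := by
  refine .of_norm (tsum_enorm_ne_top_iff_summable_norm.mp ?_)
  convert hF using 1
  refine tsum_congr fun m => ?_
  rw [enorm_mul, enorm_prod, mul_comm, enorm_complex_ofReal]

theorem wordSum_eq_sum {κ : Type*} {s : Finset κ} {r : κ → ℝ} {G : κ → WordFun ι ℝ}
    (hFG : ∀ m : Fin J → ι, F (List.ofFn m) = ∑ a ∈ s, r a * G a (List.ofFn m))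
    (hG : ∀ a ∈ s, wordNorm (fun k => ‖β k‖ₑ) J (G a) ≠ ⊤) :
    wordSum β J F = ∑ a ∈ s, r a * wordSum β J (G a) := by
  have h_sum := hasSum_sum fun a ha => (summable_wordSum (hG a ha)).hasSum.mul_left (r a : ℂ)
  refine (tsum_congr fun m => ?_).trans h_sum.tsum_eq
  simp [hFG, Finset.sum_mul, mul_assoc]

theorem wordSum_symmetrize (hF : wordNorm (fun k => ‖β k‖ₑ) J F ≠ ⊤) :
    wordSum β J (symmetrize F) = J.factorial * wordSum β J F := by
  have h_perm (σ : Equiv.Perm (Fin J)) :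
      HasSum (fun m : Fin J → ι => (F (List.ofFn (m ∘ σ)) : ℂ) * ∏ i, β (m i))
        (wordSum β J F) := by
    have h := (σ.symm.arrowCongr (Equiv.refl ι)).hasSum_iff.mpr (summable_wordSum hF).hasSum
    refine h.congr_fun fun m => ?_
    rw [← Equiv.prod_comp σ]
    rfl
  have h := hasSum_sum fun σ (_ : σ ∈ Finset.univ) => h_perm σ
  rw [Finset.sum_const, Finset.card_univ, Fintype.card_perm, Fintype.card_fin, nsmul_eq_mul] at h
  rw [wordSum, ← h.tsum_eq]
  refine tsum_congr fun m => ?_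
  rw [symmetrize_ofFn, Complex.ofReal_sum, Finset.sum_mul]

theorem wordSum_concat_letter (hF : wordNorm (fun k => ‖β k‖ₑ) J F ≠ ⊤)
    (hβ : ∑' k, ‖β k‖ₑ ≠ ⊤) :
    wordSum β (J + 1) (concat F (letter ι)) = wordSum β J F * ∑' k, β k := by
  have h_terms (p : ι × (Fin J → ι)) :
      (((concat F (letter ι)) (List.ofFn (Fin.snocEquiv (fun _ => ι) p)) : ℝ) : ℂ) *
        ∏ i, β (Fin.snocEquiv (fun _ => ι) p i) =
      β p.1 * (F (List.ofFn p.2) * ∏ i, β (p.2 i)) := by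
    simp only [Fin.snocEquiv, Equiv.coe_fn_mk, Fin.prod_univ_castSucc, Fin.snoc_castSucc,
      Fin.snoc_last, List.ofFn_succ', concat_letter_append_singleton, List.concat_eq_append]
    ring
  have hβ' : Summable fun k => ‖β k‖ := tsum_enorm_ne_top_iff_summable_norm.mp hβ
  rw [wordSum, ← (Fin.snocEquiv fun _ => ι).tsum_eq, tsum_congr h_terms, wordSum, mul_comm,
    tsum_mul_tsum_of_summable_norm hβ' (summable_wordSum hF).norm]

variable {η : ℝ} {φ : ι → ℝ} {K : ℤ}

theorem wordSum_fWord_succ (hJ : 1 ≤ J) (hK : 0 ≤ K) (hKJ : K ≤ J + 1)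
    (hg : ∀ K, wordNorm (fun k => ‖β k‖ₑ) J (gWord η φ K) ≠ ⊤) (hβ : ∑' k, ‖β k‖ₑ ≠ ⊤) :
    wordSum β (J + 1) (fWord η φ K) = (η : ℂ)⁻¹ * (∑ a ∈ ({-1, 0, 1} : Finset ℤ),
      omegaCoef a * wordSum β J (gWord η φ (K + a))) * ∑' k, β k := by
  have hgβ (K : ℤ) : wordNorm (fun k => ‖β k‖ₑ) (J + 1) (concat (gWord η φ K) (letter ι)) ≠ ⊤ := by
    rw [wordNorm_concat_letter]
    exact ENNReal.mul_ne_top (hg K) hβ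
  have h_sym (K : ℤ) : wordNorm (fun k => ‖β k‖ₑ) (J + 1)
      (symmetrize (concat (gWord η φ K) (letter ι))) ≠ ⊤ :=
    ne_top_of_le_ne_top (ENNReal.mul_ne_top (ENNReal.natCast_ne_top _) (hgβ K))
      (wordNorm_symmetrize_le _)
  have h_fac : ((J + 1).factorial : ℝ) ≠ 0 := by positivity
  rw [wordSum_eq_sum (r := fun a => ((J + 1).factorial : ℝ)⁻¹ * (η⁻¹ * omegaCoef a))
    (G := fun a => symmetrize (concat (gWord η φ (K + a)) (letter ι))) (fun m => ?_)
    fun a _ => h_sym _, Finset.mul_sum, Finset.sum_mul]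
  · refine Finset.sum_congr rfl fun a _ => ?_
    rw [wordSum_symmetrize (hgβ _), wordSum_concat_letter (hg _) hβ]
    have h_fac' : ((J + 1).factorial : ℂ) ≠ 0 := by exact_mod_cast h_fac
    push_cast
    field_simp
  · have h := factorial_mul_fWord (η := η) (φ := φ) (l := List.ofFn m) hK
      (by simpa using hKJ) (by simpa using hJ)
    rw [List.length_ofFn] at h
    simp_rw [mul_assoc, ← Finset.mul_sum]
    rw [← h, inv_mul_cancel_left₀ h_fac]

end WordFun

theorem tsum_int_eq_sum_natCast {α : Type*} [AddCommMonoid α] [TopologicalSpace α] {F : ℤ → α}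
    (s : Finset ℕ) (hF : ∀ K : ℤ, (∀ k ∈ s, (k : ℤ) ≠ K) → F K = 0) :
    ∑' K, F K = ∑ k ∈ s, F k := by
  rw [tsum_eq_sum (s := s.map Nat.castEmbedding), Finset.sum_map]
  · rfl
  · intro K hK
    exact hF K fun k hk h => hK (Finset.mem_map.mpr ⟨k, hk, h⟩)

theorem sum_range_shift_mul_pow {J : ℕ} {G : ℤ → ℂ} (hG : ∀ K, K ≤ 0 ∨ (J : ℤ) < K → G K = 0)
    {z : ℂ} (hz : z ≠ 0) {a : ℤ} (ha : -1 ≤ a) (ha' : a ≤ 1) :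
    ∑ K ∈ Finset.range (J + 2), G (K + a) * z ^ K =
      z ^ (-a) * ∑ K ∈ Finset.Icc 1 J, G K * z ^ K := by
  calc ∑ K ∈ Finset.range (J + 2), G (K + a) * z ^ K
      = ∑' K : ℤ, G (K + a) * z ^ K := by
        rw [tsum_int_eq_sum_natCast (Finset.range (J + 2)) fun K hK => ?_]
        · simp
        · rw [hG, zero_mul]
          by_contra! h
          exact hK K.toNat (Finset.mem_range.mpr (by omega)) (by omega)
    _ = ∑' K : ℤ, z ^ (-a) * (G K * z ^ K) := by
        rw [← (Equiv.addRight (-a)).tsum_eq]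
        refine tsum_congr fun K => ?_
        rw [Equiv.coe_addRight, neg_add_cancel_right, zpow_add₀ hz]
        ring
    _ = z ^ (-a) * ∑ K ∈ Finset.Icc 1 J, G K * z ^ K := by
        rw [tsum_mul_left, tsum_int_eq_sum_natCast (Finset.Icc 1 J) fun K hK => ?_]
        · simp
        · rw [hG, zero_mul]
          by_contra! h
          exact hK K.toNat (Finset.mem_Icc.mpr (by omega)) (by omega)

theorem sum_omegaCoef_shift_mul_pow {J : ℕ} {G : ℤ → ℂ}
    (hG : ∀ K, K ≤ 0 ∨ (J : ℤ) < K → G K = 0) {z : ℂ} (hz : z ≠ 0) :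
    ∑ K ∈ Finset.range (J + 2), (∑ a ∈ ({-1, 0, 1} : Finset ℤ), omegaCoef a * G (K + a)) * z ^ K =
      ((z + z⁻¹) / 2 - 1) * ∑ K ∈ Finset.Icc 1 J, G K * z ^ K := by
  have h_shift : ∀ a ∈ ({-1, 0, 1} : Finset ℤ),
      ∑ K ∈ Finset.range (J + 2), omegaCoef a * G (K + a) * z ^ K =
        omegaCoef a * (z ^ (-a) * ∑ K ∈ Finset.Icc 1 J, G K * z ^ K) := fun a ha => by
    have ha : -1 ≤ a ∧ a ≤ 1 := by
      simp only [Finset.mem_insert, Finset.mem_singleton] at ha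
      omega
    simp only [mul_assoc, ← Finset.mul_sum]
    rw [sum_range_shift_mul_pow hG hz ha.1 ha.2]
  simp only [Finset.sum_mul]
  rw [Finset.sum_comm, Finset.sum_congr rfl h_shift, Finset.sum_insert (by decide),
    Finset.sum_insert (by decide), Finset.sum_singleton]
  simp only [omegaCoef]
  norm_num
  ring

namespace WordFun

variable {ι : Type*} {η : ℝ} {φ : ι → ℝ} {J : ℕ}

theorem wordNorm_le_sum {κ : Type*} {s : Finset κ} {w : ι → ℝ≥0∞} {F : WordFun ι ℝ}
    {C : κ → ℝ≥0∞} {G : κ → WordFun ι ℝ}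
    (h : ∀ m : Fin J → ι, ‖F (List.ofFn m)‖ₑ ≤ ∑ a ∈ s, C a * ‖G a (List.ofFn m)‖ₑ) :
    wordNorm w J F ≤ ∑ a ∈ s, C a * wordNorm w J (G a) := by
  simp only [wordNorm, ← ENNReal.tsum_mul_left]
  rw [← Summable.tsum_finsetSum fun _ _ => ENNReal.summable]
  refine ENNReal.tsum_le_tsum fun m => ?_
  simp only [mul_left_comm _ (∏ i, w (m i)), ← Finset.mul_sum]
  gcongr
  exact h m

theorem enorm_fWord_le (K : ℤ) {l : List ι} (hl : 2 ≤ l.length) :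
    ‖fWord η φ K l‖ₑ ≤ ∑ a ∈ ({-1, 0, 1} : Finset ℤ), ‖η⁻¹ * omegaCoef a‖ₑ *
      ‖symmetrize (concat (gWord η φ (K + a)) (letter ι)) l‖ₑ := by
  by_cases hK : 0 ≤ K ∧ K ≤ l.length
  · refine (enorm_le_enorm_factorial_mul l.length _).trans ?_
    rw [factorial_mul_fWord hK.1 hK.2 hl, Finset.mul_sum]
    refine (enorm_sum_le _ _).trans_eq (Finset.sum_congr rfl fun a _ => ?_)
    rw [← mul_assoc, enorm_mul]
  · rw [fWord_apply, fAux_eq_zero (by omega), enorm_zero]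
    exact zero_le

theorem wordNorm_fWord_one_le (w : ι → ℝ≥0∞) (K : ℤ) :
    wordNorm w 1 (fWord η φ K) ≤ ‖η⁻¹‖ₑ * ∑' k, w k := by
  have h_le (m : Fin 1 → ι) : ‖fWord η φ K (List.ofFn m)‖ₑ ≤ ‖η⁻¹‖ₑ := by
    rw [fWord_apply, List.length_ofFn, fAux_one]
    split_ifs <;> simp
  rw [wordNorm, ← (Equiv.funUnique (Fin 1) ι).symm.tsum_eq, ← ENNReal.tsum_mul_left]
  refine ENNReal.tsum_le_tsum fun k => ?_
  rw [mul_comm]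
  gcongr
  · exact h_le _
  · simp

theorem wordNorm_fWord_succ_ne_top {w : ι → ℝ≥0∞} (hw : ∑' k, w k ≠ ⊤)
    (hg : ∀ K, wordNorm w J (gWord η φ K) ≠ ⊤) (K : ℤ) :
    wordNorm w (J + 1) (fWord η φ K) ≠ ⊤ := by
  rcases J with _ | J
  · exact ne_top_of_le_ne_top (ENNReal.mul_ne_top enorm_ne_top hw) (wordNorm_fWord_one_le w K)
  · refine ne_top_of_le_ne_top (ENNReal.sum_ne_top.mpr fun a _ => ENNReal.mul_ne_top enorm_ne_top
      (ne_top_of_le_ne_top (ENNReal.mul_ne_top (ENNReal.natCast_ne_top _) ?_)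
        (wordNorm_symmetrize_le _)))
      (wordNorm_le_sum fun m => enorm_fWord_le K (by simp))
    rw [wordNorm_concat_letter]
    exact ENNReal.mul_ne_top (hg _) hw

theorem sum_wordSum_fWord_succ_mul_pow {β : ι → ℂ} (hJ : 1 ≤ J)
    (hg : ∀ K, wordNorm (fun k => ‖β k‖ₑ) J (gWord η φ K) ≠ ⊤) (hβ : ∑' k, ‖β k‖ₑ ≠ ⊤)
    {z : ℂ} (hz : z ≠ 0) :
    ∑ K ∈ Finset.range (J + 2), wordSum β (J + 1) (fWord η φ K) * z ^ K =
      (∑' k, β k) / η * ((z + z⁻¹) / 2 - 1) *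
        ∑ K ∈ Finset.Icc 1 J, wordSum β J (gWord η φ K) * z ^ K := by
  have h_zero (K : ℤ) (hK : K ≤ 0 ∨ (J : ℤ) < K) : wordSum β J (gWord η φ K) = 0 := by
    have hg0 (m : Fin J → ι) : gWord η φ K (List.ofFn m) = 0 :=
      gWord_eq_zero (by rwa [List.length_ofFn])
    simp [wordSum, hg0]
  rw [mul_assoc, ← sum_omegaCoef_shift_mul_pow h_zero hz, Finset.mul_sum]
  refine Finset.sum_congr rfl fun K hK => ?_
  rw [wordSum_fWord_succ hJ (by omega) (by have := Finset.mem_range.mp hK; omega) hg hβ]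
  ring

end WordFun

section VariationMajorant

open Set Filter Topology

/-- `w` controls both the size and the increments of `G` on `s`: for functions that vanish at
infinity this is how a bound on the variation of `G` on `[x, ∞)` by `w x` is used. -/
structure VariationMajorant {E : Type*} [SeminormedAddCommGroup E] (w : ℝ → ℝ) (G : ℝ → E)
    (s : Set ℝ) : Prop where
  norm_le : ∀ x ∈ s, ‖G x‖ ≤ w x
  norm_sub_le_sub : ∀ x ∈ s, ∀ y ∈ s, x ≤ y → ‖G y - G x‖ ≤ w x - w y

namespace VariationMajorant

section SeminormedAddCommGroup

variable {E : Type*} [SeminormedAddCommGroup E] {w : ℝ → ℝ} {G : ℝ → E} {s t : Set ℝ}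

theorem mono (h : VariationMajorant w G t) (hst : s ⊆ t) : VariationMajorant w G s :=
  ⟨fun x hx => h.norm_le x (hst hx), fun x hx y hy => h.norm_sub_le_sub x (hst hx) y (hst hy)⟩

theorem nonneg (h : VariationMajorant w G s) {x : ℝ} (hx : x ∈ s) : 0 ≤ w x :=
  (norm_nonneg _).trans (h.norm_le x hx)

theorem antitoneOn (h : VariationMajorant w G s) : AntitoneOn w s := fun x hx y hy hxy =>
  sub_nonneg.mp ((norm_nonneg _).trans (h.norm_sub_le_sub x hx y hy hxy))

end SeminormedAddCommGroup

section NormedCommRing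

variable {A : Type*} [NormedCommRing A] {s : Set ℝ}

theorem one [NormOneClass A] : VariationMajorant (fun _ => 1) (fun _ => (1 : A)) s :=
  ⟨by simp, by simp⟩

theorem mul {w v : ℝ → ℝ} {G H : ℝ → A} (hG : VariationMajorant w G s)
    (hH : VariationMajorant v H s) :
    VariationMajorant (fun x => w x * v x) (fun x => G x * H x) s := by
  refine ⟨fun x hx => (norm_mul_le _ _).trans (mul_le_mul (hG.norm_le x hx) (hH.norm_le x hx)
    (norm_nonneg _) (hG.nonneg hx)), fun x hx y hy hxy => ?_⟩
  calc ‖G y * H y - G x * H x‖ = ‖(G y - G x) * H x + G y * (H y - H x)‖ := by ring_nf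
    _ ≤ ‖G y - G x‖ * ‖H x‖ + ‖G y‖ * ‖H y - H x‖ :=
        (norm_add_le _ _).trans (add_le_add (norm_mul_le _ _) (norm_mul_le _ _))
    _ ≤ (w x - w y) * v x + w y * (v x - v y) := by
        gcongr
        · exact sub_nonneg.mpr (hG.antitoneOn hx hy hxy)
        · exact hG.norm_sub_le_sub x hx y hy hxy
        · exact hH.norm_le x hx
        · exact hG.nonneg hy
        · exact hG.norm_le y hy
        · exact hH.norm_sub_le_sub x hx y hy hxy
    _ = w x * v x - w y * v y := by ring

theorem prod [NormOneClass A] {κ : Type*} {w : κ → ℝ → ℝ} {G : κ → ℝ → A} (t : Finset κ)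
    (h : ∀ i, VariationMajorant (w i) (G i) s) :
    VariationMajorant (fun x => ∏ i ∈ t, w i x) (fun x => ∏ i ∈ t, G i x) s := by
  classical
  induction t using Finset.induction_on with
  | empty => simpa using one
  | insert i t hi ih => simpa only [Finset.prod_insert hi] using (h i).mul ih

end NormedCommRing

theorem aemeasurable_comp {E : Type*} [SeminormedAddCommGroup E] {w : ℝ → ℝ} {G : ℝ → E}
    {s : Set ℝ} (h : VariationMajorant w G s) (hs : MeasurableSet s) {r : E → ℝ}
    (hr : LipschitzWith 1 r) : AEMeasurable (fun x => r (G x)) (volume.restrict s) := by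
  have h_anti : AntitoneOn (fun x => w x + r (G x)) s := fun x hx y hy hxy => by
    have h_dist := hr.dist_le_mul (G y) (G x)
    rw [NNReal.coe_one, one_mul, Real.dist_eq, dist_eq_norm] at h_dist
    have := (le_abs_self _).trans (h_dist.trans (h.norm_sub_le_sub x hx y hy hxy))
    simp only
    linarith
  simpa [Pi.sub_def] using (aemeasurable_restrict_of_antitoneOn (μ := volume) hs h_anti).sub
    (aemeasurable_restrict_of_antitoneOn hs h.antitoneOn)

theorem aestronglyMeasurable {w : ℝ → ℝ} {G : ℝ → ℂ} {s : Set ℝ} (h : VariationMajorant w G s)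
    (hs : MeasurableSet s) : AEStronglyMeasurable G (volume.restrict s) := by
  have h_re := h.aemeasurable_comp hs (r := Complex.re) <| LipschitzWith.of_le_add fun z z' => by
    have h_le := Complex.re_le_norm (z - z')
    rw [Complex.sub_re, ← dist_eq_norm] at h_le
    linarith
  have h_im := h.aemeasurable_comp hs (r := Complex.im) <| LipschitzWith.of_le_add fun z z' => by
    have h_le := Complex.im_le_norm (z - z')
    rw [Complex.sub_im, ← dist_eq_norm] at h_le
    linarith
  have h_sum := (Complex.measurable_ofReal.comp_aemeasurable h_re).add
    ((Complex.measurable_ofReal.comp_aemeasurable h_im).mul_const Complex.I)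
  exact h_sum.aestronglyMeasurable.congr (ae_of_all _ fun x => Complex.re_add_im (G x))

end VariationMajorant

/-- Sum the increments over a subdivision on whose pieces `P` varies by at most `ε`; let `ε → 0`. -/
theorem norm_sub_le_of_increment_le {E : Type*} [SeminormedAddCommGroup E] {F : ℝ → E}
    {W P : ℝ → ℝ} {a b C : ℝ} (hab : a ≤ b) (hP : ContinuousOn P (Icc a b))
    (hW : MonotoneOn W (Icc a b))
    (h : ∀ x ∈ Icc a b, ∀ y ∈ Icc a b, x ≤ y →
      ‖F y - F x‖ ≤ (W y - W x) * (C + |P y - P x|)) :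
    ‖F b - F a‖ ≤ (W b - W a) * C := by
  have h_approx (ε : ℝ) (hε : 0 < ε) : ‖F b - F a‖ ≤ (W b - W a) * (C + ε) := by
    obtain ⟨t, ht0, h_mono, ⟨N, hN⟩, h_cover⟩ := exists_monotone_Icc_subset_open_cover_Icc hab
      (c := fun z : Icc a b => {x : Icc a b | |P x - P z| < ε / 2})
      (fun z => isOpen_lt ((hP.domRestrict.sub continuous_const).abs) continuous_const)
      (fun z _ => mem_iUnion.mpr ⟨z, by simpa using half_pos hε⟩)
    have h_short (k : ℕ) : |P (t (k + 1)) - P (t k)| ≤ ε := by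
      obtain ⟨z, hz⟩ := h_cover k
      have h_left : |P (t k) - P z| < ε / 2 := hz (left_mem_Icc.mpr (h_mono k.le_succ))
      have h_right : |P (t (k + 1)) - P z| < ε / 2 := hz (right_mem_Icc.mpr (h_mono k.le_succ))
      have := abs_sub_le (P (t (k + 1))) (P z) (P (t k))
      rw [abs_sub_comm (P z)] at this
      linarith
    calc ‖F b - F a‖ = ‖∑ k ∈ Finset.range N, (F (t (k + 1)) - F (t k))‖ := by
          rw [Finset.sum_range_sub (fun k => F (t k)), ht0, hN N le_rfl]
      _ ≤ ∑ k ∈ Finset.range N, (W (t (k + 1)) - W (t k)) * (C + ε) := by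
          refine norm_sum_le_of_le _ fun k _ => ?_
          have h_le : (t k : ℝ) ≤ t (k + 1) := h_mono k.le_succ
          refine (h _ (t k).2 _ (t (k + 1)).2 h_le).trans ?_
          gcongr
          · exact sub_nonneg.mpr (hW (t k).2 (t (k + 1)).2 h_le)
          · exact h_short k
      _ = (W b - W a) * (C + ε) := by
          rw [← Finset.sum_mul, Finset.sum_range_sub (fun k => W (t k)), ht0, hN N le_rfl]
  have h_lim : Tendsto (fun ε : ℝ => (W b - W a) * (C + ε)) (𝓝[>] 0) (𝓝 ((W b - W a) * C)) := by
    have h_cont : Continuous fun ε : ℝ => (W b - W a) * (C + ε) := by fun_prop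
    simpa using (h_cont.tendsto 0).mono_left nhdsWithin_le_nhds
  exact ge_of_tendsto h_lim (eventually_of_mem self_mem_nhdsWithin h_approx)

end VariationMajorant

section AbsolutelyContinuous

open Set Filter Topology

variable {a b : ℝ}

theorem absolutelyContinuousOnInterval_comp {X Y : Type*} [PseudoMetricSpace X]
    [PseudoMetricSpace Y] {f : ℝ → X} {g : X → Y} {C : NNReal} (hg : LipschitzWith C g)
    (hf : AbsolutelyContinuousOnInterval f a b) :
    AbsolutelyContinuousOnInterval (fun x => g (f x)) a b := by
  refine squeeze_zero (fun I => Finset.sum_nonneg fun i _ => dist_nonneg) (fun I => ?_)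
    (by simpa using Tendsto.const_mul (C : ℝ) hf)
  rw [Finset.mul_sum]
  exact Finset.sum_le_sum fun i _ => hg.dist_le_mul _ _

theorem integral_comp_primitive_mul {g g' : ℝ → ℝ} {C : NNReal} (hg : LipschitzWith C g)
    (hg' : ∀ y, HasDerivAt g (g' y) y) {f : ℝ → ℝ} (hf : IntervalIntegrable f volume a b)
    (y₀ : ℝ) :
    ∫ x in a..b, g' (y₀ + ∫ t in a..x, f t) * f x = g (y₀ + ∫ t in a..b, f t) - g y₀ := by
  have h_ac := absolutelyContinuousOnInterval_comp (hg.comp (isometry_add_left y₀).lipschitz)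
    (hf.absolutelyContinuousOnInterval_intervalIntegral left_mem_uIcc)
  have h_ftc := h_ac.integral_deriv_eq_sub
  simp only [Function.comp_apply, intervalIntegral.integral_same, add_zero] at h_ftc
  rw [← h_ftc]
  refine intervalIntegral.integral_congr_ae ?_
  filter_upwards [hf.ae_hasDerivAt_integral] with x hx hx_mem
  have h_prim := hx (uIoc_subset_uIcc hx_mem) a left_mem_uIcc
  exact ((hg' _).comp x (h_prim.const_add y₀)).deriv.symm

/-- `L` is a primitive of `L'` on `[a, b]`, in the sense of absolutely continuous functions. -/
structure IsPrimitiveOn {E : Type*} [NormedAddCommGroup E] [NormedSpace ℝ E] (L L' : ℝ → E)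
    (a b : ℝ) : Prop where
  intervalIntegrable : IntervalIntegrable L' volume a b
  sub_eq : ∀ x ∈ Icc a b, ∀ y ∈ Icc a b, L y - L x = ∫ t in x..y, L' t

namespace IsPrimitiveOn

section NormedSpace

variable {E : Type*} [NormedAddCommGroup E] [NormedSpace ℝ E] {L L' : ℝ → E}

theorem mono (h : IsPrimitiveOn L L' a b) {x y : ℝ} (hx : x ∈ Icc a b) (hy : y ∈ Icc a b) :
    IsPrimitiveOn L L' x y where
  intervalIntegrable := h.intervalIntegrable.mono_set (uIcc_subset_uIcc (Icc_subset_uIcc hx)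
    (Icc_subset_uIcc hy))
  sub_eq := fun s hs t ht => h.sub_eq s ⟨hx.1.trans hs.1, hs.2.trans hy.2⟩ t
    ⟨hx.1.trans ht.1, ht.2.trans hy.2⟩

theorem of_forall_sub_eq (hint : IntervalIntegrable L' volume a b)
    (h : ∀ x ∈ Icc a b, L x - L a = ∫ t in a..x, L' t) : IsPrimitiveOn L L' a b := by
  refine ⟨hint, fun x hx y hy => ?_⟩
  have h_mono {z : ℝ} (hz : z ∈ Icc a b) : IntervalIntegrable L' volume a z :=
    hint.mono_set (uIcc_subset_uIcc left_mem_uIcc (Icc_subset_uIcc hz))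
  rw [← intervalIntegral.integral_interval_sub_left (h_mono hy) (h_mono hx), ← h y hy, ← h x hx]
  abel

theorem continuousOn (h : IsPrimitiveOn L L' a b) (hab : a ≤ b) : ContinuousOn L (Icc a b) := by
  have h_prim :=
    intervalIntegral.continuousOn_primitive_interval' h.intervalIntegrable left_mem_uIcc
  rw [uIcc_of_le hab] at h_prim
  exact (continuousOn_const.add h_prim).congr fun x hx =>
    (add_eq_of_eq_sub' (h.sub_eq a (left_mem_Icc.mpr hab) x hx).symm).symm

end NormedSpace

theorem comp {L L' : ℝ → ℝ} (h : IsPrimitiveOn L L' a b) (hab : a ≤ b) {g g' : ℝ → ℝ}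
    {C : NNReal} (hg : LipschitzWith C g) (hg' : ∀ y, HasDerivAt g (g' y) y)
    (hg'_cont : Continuous g') :
    IsPrimitiveOn (fun x => g (L x)) (fun x => g' (L x) * L' x) a b := by
  have h_cont : ContinuousOn (fun x => g' (L x)) (uIcc a b) := by
    rw [uIcc_of_le hab]
    exact hg'_cont.comp_continuousOn (h.continuousOn hab)
  refine .of_forall_sub_eq (h.intervalIntegrable.continuousOn_mul h_cont) fun x hx => ?_
  have ha : a ∈ Icc a b := left_mem_Icc.mpr hab
  have h_eq (y : ℝ) (hy : y ∈ Icc a b) : L a + ∫ t in a..y, L' t = L y := by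
    rw [← h.sub_eq a ha y hy, add_sub_cancel]
  rw [← h_eq x hx, ← integral_comp_primitive_mul hg hg' (h.mono ha hx).intervalIntegrable (L a)]
  refine intervalIntegral.integral_congr fun t ht => ?_
  rw [uIcc_of_le hx.1] at ht
  simp only [h_eq t ⟨ht.1, ht.2.trans hx.2⟩]

theorem cexp_I_mul {L L' : ℝ → ℝ} (h : IsPrimitiveOn L L' a b) (hab : a ≤ b) :
    IsPrimitiveOn (fun x => Complex.exp (Complex.I * L x))
      (fun x => Complex.I * (L' x * Complex.exp (Complex.I * L x))) a b := by
  have h_cos := h.comp hab Real.lipschitzWith_cos Real.hasDerivAt_cos (by fun_prop)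
  have h_sin := h.comp hab Real.lipschitzWith_sin Real.hasDerivAt_sin (by fun_prop)
  have h_deriv (t : ℝ) : Complex.I * (L' t * Complex.exp (Complex.I * L t)) =
      ((-Real.sin (L t) * L' t : ℝ) : ℂ) + ((Real.cos (L t) * L' t : ℝ) : ℂ) * Complex.I := by
    rw [mul_comm Complex.I (L t : ℂ), Complex.exp_mul_I]
    push_cast
    linear_combination L' t * Complex.sin (L t) * Complex.I_mul_I
  simp only [h_deriv]
  have h_int {f : ℝ → ℝ} {x y : ℝ} (hf : IntervalIntegrable f volume x y) :
      IntervalIntegrable (fun t => (f t : ℂ)) volume x y := ⟨hf.1.ofReal, hf.2.ofReal⟩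
  refine ⟨(h_int h_cos.intervalIntegrable).add
    ((h_int h_sin.intervalIntegrable).mul_const _), fun x hx y hy => ?_⟩
  rw [intervalIntegral.integral_add (h_int (h_cos.mono hx hy).intervalIntegrable)
    ((h_int (h_sin.mono hx hy).intervalIntegrable).mul_const _),
    intervalIntegral.integral_mul_const, intervalIntegral.integral_ofReal,
    intervalIntegral.integral_ofReal, ← h_cos.sub_eq x hx y hy, ← h_sin.sub_eq x hx y hy,
    mul_comm Complex.I, mul_comm Complex.I, Complex.exp_mul_I, Complex.exp_mul_I]
  push_cast
  ring

end IsPrimitiveOn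

namespace VariationMajorant

variable {w : ℝ → ℝ} {G E D : ℝ → ℂ}

theorem intervalIntegrable_mul (hab : a ≤ b) (hG : VariationMajorant w G (Icc a b))
    (hD : IntervalIntegrable D volume a b) :
    IntervalIntegrable (fun t => G t * D t) volume a b := by
  rw [intervalIntegrable_iff, uIoc_of_le hab] at hD ⊢
  refine Integrable.bdd_mul (c := w a) hD
    ((hG.mono Ioc_subset_Icc_self).aestronglyMeasurable measurableSet_Ioc) ?_
  filter_upwards [ae_restrict_mem measurableSet_Ioc] with t ht
  have ht := Ioc_subset_Icc_self ht
  exact (hG.norm_le t ht).trans (hG.antitoneOn (left_mem_Icc.mpr hab) ht ht.1)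

theorem norm_integral_sub_mul_le (hab : a ≤ b) (hG : VariationMajorant w G (Icc a b))
    (hD : IntervalIntegrable D volume a b) :
    ‖∫ t in a..b, (G t - G b) * D t‖ ≤ (w a - w b) * ∫ t in a..b, ‖D t‖ := by
  rw [← intervalIntegral.integral_const_mul]
  refine intervalIntegral.norm_integral_le_of_norm_le hab (ae_of_all _ fun t ht => ?_)
    (hD.norm.const_mul _)
  have ht := Ioc_subset_Icc_self ht
  have hb : b ∈ Icc a b := right_mem_Icc.mpr hab
  rw [norm_mul, norm_sub_rev]
  gcongr
  exact (hG.norm_sub_le_sub t ht b hb ht.2).trans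
    (sub_le_sub_right (hG.antitoneOn (left_mem_Icc.mpr hab) ht ht.1) _)

theorem norm_integral_mul_sub_le (hab : a ≤ b) (hG : VariationMajorant w G (Icc a b))
    (hE : IsPrimitiveOn E D a b) (hE_le : ‖E a‖ ≤ 1) :
    ‖(∫ t in a..b, G t * D t) - (G b * E b - G a * E a)‖ ≤
      (w a - w b) * (1 + ∫ t in a..b, ‖D t‖) := by
  have ha : a ∈ Icc a b := left_mem_Icc.mpr hab
  have hb : b ∈ Icc a b := right_mem_Icc.mpr hab
  have hD := hE.intervalIntegrable
  have h_parts : (∫ t in a..b, G t * D t) - (G b * E b - G a * E a) =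
      (∫ t in a..b, (G t - G b) * D t) - (G b - G a) * E a := by
    simp only [sub_mul (G _)]
    rw [intervalIntegral.integral_sub (hG.intervalIntegrable_mul hab hD) (hD.const_mul _),
      intervalIntegral.integral_const_mul, ← hE.sub_eq a ha b hb]
    ring
  have h_boundary : ‖(G b - G a) * E a‖ ≤ (w a - w b) * 1 := by
    rw [norm_mul]
    exact mul_le_mul (hG.norm_sub_le_sub a ha b hb hab) hE_le (norm_nonneg _)
      (sub_nonneg.mpr (hG.antitoneOn ha hb hab))
  rw [h_parts, mul_add, add_comm]
  exact (norm_sub_le _ _).trans (add_le_add (hG.norm_integral_sub_mul_le hab hD) h_boundary)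

/-- Integration by parts with the Stieltjes integral `∫ E dG` replaced by a bound on increments:
those of `∫ G D - G E` are at most those of `-w`, up to an error vanishing on short intervals. -/
theorem norm_integral_mul_le (hab : a ≤ b) (hG : VariationMajorant w G (Icc a b))
    (hE : IsPrimitiveOn E D a b) (hE_le : ∀ x ∈ Icc a b, ‖E x‖ ≤ 1) :
    ‖∫ t in a..b, G t * D t‖ ≤ 2 * w a := by
  have ha : a ∈ Icc a b := left_mem_Icc.mpr hab
  have hb : b ∈ Icc a b := right_mem_Icc.mpr hab
  have hP : IsPrimitiveOn (fun x => ∫ t in a..x, ‖D t‖) (fun t => ‖D t‖) a b :=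
    .of_forall_sub_eq hE.intervalIntegrable.norm fun x _ => by simp
  have hF : IsPrimitiveOn (fun x => ∫ t in a..x, G t * D t) (fun t => G t * D t) a b :=
    .of_forall_sub_eq (hG.intervalIntegrable_mul hab hE.intervalIntegrable) fun x _ => by simp
  have h_incr := norm_sub_le_of_increment_le (F := fun x => (∫ t in a..x, G t * D t) - G x * E x)
    (W := fun x => -w x) (C := 1) hab (hP.continuousOn hab)
    (fun x hx y hy hxy => neg_le_neg (hG.antitoneOn hx hy hxy)) fun x hx y hy hxy => ?_
  · have h_end {x : ℝ} (hx : x ∈ Icc a b) : ‖G x * E x‖ ≤ w x := by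
      rw [norm_mul, ← mul_one (w x)]
      exact mul_le_mul (hG.norm_le x hx) (hE_le x hx) (norm_nonneg _) (hG.nonneg hx)
    have h_split : ∫ t in a..b, G t * D t =
        ((∫ t in a..b, G t * D t) - G b * E b - (0 - G a * E a)) + (G b * E b - G a * E a) := by
      ring
    rw [intervalIntegral.integral_same] at h_incr
    have h_tri := norm_add_le ((∫ t in a..b, G t * D t) - G b * E b - (0 - G a * E a))
      (G b * E b - G a * E a)
    rw [← h_split] at h_tri
    linarith [norm_sub_le (G b * E b) (G a * E a), h_end ha, h_end hb]
  · have h_step := (hG.mono (Icc_subset_Icc hx.1 hy.2)).norm_integral_mul_sub_le hxy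
      (hE.mono hx hy) (hE_le x hx)
    rw [← hF.sub_eq x hx y hy, ← hP.sub_eq x hx y hy] at h_step
    rw [neg_sub_neg, sub_sub_sub_comm]
    exact h_step.trans (by gcongr; exacts [sub_nonneg.mpr (hG.antitoneOn hx hy hxy), le_abs_self _])

end VariationMajorant

end AbsolutelyContinuous

section TailVariation

open Set Filter Topology

variable {E : Type*} [NormedAddCommGroup E] {g : ℝ → E} {c : ℝ}

theorem tendsto_zero_of_boundedVariationOn_of_lintegral_ne_top [CompleteSpace E]
    (hg : BoundedVariationOn g (Ioi c)) {p : ℕ} (hp : ∫⁻ x in Ioi c, ‖g x‖ₑ ^ p ≠ ⊤) :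
    Tendsto g atTop (𝓝 0) := by
  obtain ⟨L, hL⟩ := hg.exists_tendsto_left_of_filter atTop
    (fun y _ => inter_mem (Ioi_mem_atTop c) (Ici_mem_atTop y)) nonempty_Ioi
  suffices L = 0 from this ▸ hL
  by_contra hL0
  obtain ⟨ε, hε, hεL⟩ := ENNReal.lt_iff_exists_nnreal_btwn.mp (enorm_pos.mpr hL0)
  obtain ⟨x, hx⟩ := eventually_atTop.mp (hL.enorm.eventually (lt_mem_nhds hεL))
  refine hp (top_le_iff.mp ?_)
  calc (⊤ : ℝ≥0∞) = ∫⁻ _ in Ioi (max c x), (ε : ℝ≥0∞) ^ p := by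
        rw [setLIntegral_const, Real.volume_Ioi, ENNReal.mul_top (pow_ne_zero _ hε.ne')]
    _ ≤ ∫⁻ y in Ioi (max c x), ‖g y‖ₑ ^ p := by
        refine setLIntegral_mono' measurableSet_Ioi fun y hy => ?_
        gcongr
        exact (hx y ((le_max_right c x).trans (mem_Ioi.mp hy).le)).le
    _ ≤ ∫⁻ y in Ioi c, ‖g y‖ₑ ^ p :=
        lintegral_mono_set (Ioi_subset_Ioi (le_max_left c x))

theorem variationMajorant_eVariationOn_Ici (hg : BoundedVariationOn g (Ioi c))
    (hg0 : Tendsto g atTop (𝓝 0)) :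
    VariationMajorant (fun x => (eVariationOn g (Ici x)).toReal) g (Ioi c) := by
  have h_top {x : ℝ} (hx : x ∈ Ioi c) : eVariationOn g (Ici x) ≠ ⊤ :=
    hg.mono (Ici_subset_Ioi.mpr hx)
  have h_dist {x y : ℝ} {s : Set ℝ} (hs : eVariationOn g s ≠ ⊤) (hx : x ∈ s) (hy : y ∈ s) :
      ‖g y - g x‖ ≤ (eVariationOn g s).toReal := by
    rw [← dist_eq_norm, dist_edist]
    exact ENNReal.toReal_mono hs (eVariationOn.edist_le g hy hx)
  refine ⟨fun x hx => ?_, fun x hx y hy hxy => ?_⟩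
  · have h_lim : Tendsto (fun y => ‖g y - g x‖) atTop (𝓝 ‖g x‖) := by
      simpa using (hg0.sub_const (g x)).norm
    exact le_of_tendsto h_lim ((eventually_ge_atTop x).mono fun y hy =>
      h_dist (h_top hx) self_mem_Ici hy)
  · have h_union := eVariationOn.union g (isGreatest_Icc hxy) (isLeast_Ici (a := y))
    rw [Icc_union_Ici_eq_Ici hxy] at h_union
    have h_Icc : eVariationOn g (Icc x y) ≠ ⊤ :=
      hg.mono (Icc_subset_Ici_self.trans (Ici_subset_Ioi.mpr hx))
    simp only [h_union, ENNReal.toReal_add h_Icc (h_top hy), add_sub_cancel_right]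
    exact h_dist h_Icc (left_mem_Icc.mpr hxy) (right_mem_Icc.mpr hxy)

end TailVariation

theorem enorm_integral_le_of_forall_gt {E : Type*} [NormedAddCommGroup E] [NormedSpace ℝ E]
    {F : ℝ → E} {a b : ℝ} {B : ℝ≥0∞} (hab : a < b)
    (h : ∀ x ∈ Set.Ioc a b, ‖∫ t in x..b, F t‖ₑ ≤ B) : ‖∫ t in a..b, F t‖ₑ ≤ B := by
  by_cases hF : IntervalIntegrable F volume a b
  · have h_cont : ContinuousWithinAt (fun x => ∫ t in x..b, F t) (Set.uIcc a b) a :=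
      intervalIntegral.continuousOn_primitive_interval_left
        ((intervalIntegrable_iff' (by simp)).mp hF) a Set.left_mem_uIcc
    rw [Set.uIcc_of_le hab.le] at h_cont
    have : (nhdsWithin a (Set.Ioc a b)).NeBot := left_nhdsWithin_Ioc_neBot hab
    exact le_of_tendsto (h_cont.mono Set.Ioc_subset_Icc_self).enorm
      (Filter.eventually_of_mem self_mem_nhdsWithin h)
  · rw [intervalIntegral.integral_undef hF, enorm_zero]
    exact zero_le

theorem enorm_integral_tsum_sum_le {α ι κ E : Type*} [MeasurableSpace α] {μ : Measure α}
    [Countable ι] [NormedAddCommGroup E] [NormedSpace ℝ E] (s : Finset κ) {f : κ → ι → α → E}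
    (hf : ∀ k ∈ s, ∀ i, Integrable (f k i) μ)
    (hf_sum : ∀ k ∈ s, ∑' i, ∫⁻ x, ‖f k i x‖ₑ ∂μ ≠ ⊤) :
    ‖∫ x, ∑' i, ∑ k ∈ s, f k i x ∂μ‖ₑ ≤ ∑ k ∈ s, ∑' i, ‖∫ x, f k i x ∂μ‖ₑ := by
  have h_top : ∑' i, ∫⁻ x, ‖∑ k ∈ s, f k i x‖ₑ ∂μ ≠ ⊤ := by
    refine ne_top_of_le_ne_top (ENNReal.sum_ne_top.mpr hf_sum) ?_
    rw [← Summable.tsum_finsetSum fun _ _ => ENNReal.summable]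
    refine ENNReal.tsum_le_tsum fun i => ?_
    rw [← lintegral_finsetSum' _ fun k hk => (hf k hk i).aestronglyMeasurable.enorm]
    exact lintegral_mono fun x => enorm_sum_le _ _
  rw [integral_tsum (fun i => Finset.aestronglyMeasurable_fun_sum s fun k hk =>
    (hf k hk i).aestronglyMeasurable) h_top, ← Summable.tsum_finsetSum fun _ _ => ENNReal.summable]
  refine enorm_tsum_le_tsum_enorm.trans (ENNReal.tsum_le_tsum fun i => ?_)
  rw [integral_finsetSum _ fun k hk => hf k hk i]
  exact enorm_sum_le _ _

namespace WordFun

variable {ι : Type*} {η : ℝ} {φ : ι → ℝ} {J K : ℕ}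

theorem sum_wordSum_fWord_sub_eq_tsum {β : ι → ℂ} {z D : ℂ} (hJ : 1 ≤ J)
    (hβ : ∑' k, ‖β k‖ₑ ≠ ⊤) (hf : ∀ K, wordNorm (fun k => ‖β k‖ₑ) J (fWord η φ K) ≠ ⊤)
    (hg : ∀ K, wordNorm (fun k => ‖β k‖ₑ) J (gWord η φ K) ≠ ⊤) (hz : z ≠ 0)
    (hD : D = (∑' k, β k) / η * ((z + z⁻¹) / 2 - 1)) :
    ∑ K ∈ Finset.Icc 1 J, wordSum β J (fWord η φ K) * z ^ K -
        ∑ K ∈ Finset.range (J + 2), wordSum β (J + 1) (fWord η φ K) * z ^ K =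
      ∑' m : Fin J → ι, ∑ K ∈ Finset.Icc 1 J,
        (fWord η φ K (List.ofFn m) - D * gWord η φ K (List.ofFn m)) *
          ((∏ i, β (m i)) * z ^ K) := by
  have h_terms (K : ℕ) : HasSum (fun m : Fin J → ι =>
      (fWord η φ K (List.ofFn m) - D * gWord η φ K (List.ofFn m)) * ((∏ i, β (m i)) * z ^ K))
      (wordSum β J (fWord η φ K) * z ^ K - D * (wordSum β J (gWord η φ K) * z ^ K)) := by
    have h_f := (summable_wordSum (hf K)).hasSum.mul_right (z ^ K)
    have h_g := ((summable_wordSum (hg K)).hasSum.mul_right (z ^ K)).mul_left D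
    exact (h_f.sub h_g).congr_fun fun m => by ring
  rw [sum_wordSum_fWord_succ_mul_pow hJ hg hβ hz, ← hD,
    (hasSum_sum fun K _ => h_terms K).tsum_eq, Finset.sum_sub_distrib, Finset.mul_sum]

end WordFun

namespace WordFun

section Prufer

open Set

variable {ι : Type*} {η : ℝ} {c : ι → ℂ} {φ : ι → ℝ} {γ : ι → ℝ → ℂ} {θ θ' : ℝ → ℝ}
  {J K : ℕ} {a b x : ℝ}

/-- The term `β_k(x) = c_k e^{-iφ_k x} γ_k(x)` of the potential. -/
noncomputable def potentialTerm (c : ι → ℂ) (φ : ι → ℝ) (γ : ι → ℝ → ℂ) (x : ℝ) (k : ι) : ℂ :=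
  c k * Complex.exp (-Complex.I * φ k * x) * γ k x

/-- The total phase of the product of `e^{iK(ηx + 2θ(x))}` and the terms of the potential along
the word `l`. -/
noncomputable def wordPhase (η : ℝ) (φ : ι → ℝ) (θ : ℝ → ℝ) (K : ℕ) (l : List ι) (x : ℝ) : ℝ :=
  K * (η * x + 2 * θ x) - (l.map φ).sum * x

/-- The derivative of `wordPhase η φ θ K l` when `θ'` is the derivative of `θ`. -/
noncomputable def wordPhaseDeriv (η : ℝ) (φ : ι → ℝ) (θ' : ℝ → ℝ) (K : ℕ) (l : List ι) (x : ℝ) :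
    ℝ :=
  K * (η + 2 * θ' x) - (l.map φ).sum

theorem isPrimitiveOn_wordPhase (hθ : IsPrimitiveOn θ θ' a b) (K : ℕ) (l : List ι) :
    IsPrimitiveOn (wordPhase η φ θ K l) (wordPhaseDeriv η φ θ' K l) a b := by
  have h_int {x y : ℝ} (h : IntervalIntegrable θ' volume x y) :
      IntervalIntegrable (fun t => K * (η + 2 * θ' t)) volume x y :=
    (intervalIntegrable_const.add (h.const_mul 2)).const_mul _
  refine ⟨(h_int hθ.intervalIntegrable).sub intervalIntegrable_const, fun x hx y hy => ?_⟩
  have h := (hθ.mono hx hy).intervalIntegrable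
  simp only [wordPhase, wordPhaseDeriv]
  rw [intervalIntegral.integral_sub (h_int h) intervalIntegrable_const,
    intervalIntegral.integral_const_mul, intervalIntegral.integral_add intervalIntegrable_const
    (h.const_mul 2), intervalIntegral.integral_const_mul, ← hθ.sub_eq x hx y hy,
    intervalIntegral.integral_const, intervalIntegral.integral_const, smul_eq_mul, smul_eq_mul]
  ring

theorem prod_potentialTerm_mul_cexp_pow (m : Fin J → ι) (K : ℕ) (x : ℝ) :
    (∏ i, potentialTerm c φ γ x (m i)) * Complex.exp (Complex.I * (η * x + 2 * θ x)) ^ K =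
      (∏ i, c (m i)) * ((∏ i, γ (m i) x) *
        Complex.exp (Complex.I * wordPhase η φ θ K (List.ofFn m) x)) := by
  have h_exp : Complex.exp (Complex.I * wordPhase η φ θ K (List.ofFn m) x) =
      (∏ i, Complex.exp (-Complex.I * φ (m i) * x)) *
        Complex.exp (Complex.I * (η * x + 2 * θ x)) ^ K := by
    rw [← Complex.exp_sum, ← Complex.exp_nat_mul, ← Complex.exp_add, ← Finset.sum_mul,
      ← Finset.mul_sum, wordPhase, List.map_ofFn, List.sum_ofFn]
    congr 1
    push_cast [Function.comp_apply]
    ring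
  simp only [potentialTerm, Finset.prod_mul_distrib]
  rw [h_exp]
  ring

theorem enorm_potentialTerm (k : ι) : ‖potentialTerm c φ γ x k‖ₑ = ‖γ k x‖ₑ * ‖c k‖ₑ := by
  have h_arg : -Complex.I * φ k * x = Complex.I * (-(φ k * x) : ℝ) := by push_cast; ring
  rw [potentialTerm, h_arg, enorm_mul, enorm_mul, Complex.enorm_exp_I_mul_ofReal,
    mul_one, mul_comm]

/-- The `m`-th term of the series for the `K`-th part of `∑ S_{J,K} - ∑ S_{J+1,K}`, the latter sum
having been brought into the form `θ' · ∑ g_{J,K} β ⋯ β e^{iK(ηx + 2θ(x))}`. -/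
noncomputable def pruferTerm (η : ℝ) (c : ι → ℂ) (φ : ι → ℝ) (γ : ι → ℝ → ℂ) (θ θ' : ℝ → ℝ)
    (K : ℕ) (m : Fin J → ι) (x : ℝ) : ℂ :=
  (fWord η φ K (List.ofFn m) - θ' x * gWord η φ K (List.ofFn m)) *
    ((∏ i, potentialTerm c φ γ x (m i)) * Complex.exp (Complex.I * (η * x + 2 * θ x)) ^ K)

theorem pruferTerm_eq {m : Fin J → ι} (hK : 1 ≤ K) (hres : K * η ≠ ((List.ofFn m).map φ).sum)
    (x : ℝ) :
    pruferTerm η c φ γ θ θ' K m x =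
      Complex.I / (2 * K) * ((∏ i, c (m i)) * gWord η φ K (List.ofFn m)) * ((∏ i, γ (m i) x) *
        (Complex.I * (wordPhaseDeriv η φ θ' K (List.ofFn m) x *
          Complex.exp (Complex.I * wordPhase η φ θ K (List.ofFn m) x)))) := by
  have hK : (K : ℝ) ≠ 0 := by positivity
  have h_den := sub_ne_zero.mpr hres
  have h_coeff : fWord η φ K (List.ofFn m) - θ' x * gWord η φ K (List.ofFn m) =
      -(2 * (K : ℝ))⁻¹ * gWord η φ K (List.ofFn m) *
        wordPhaseDeriv η φ θ' K (List.ofFn m) x := by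
    rw [gWord_eq, wordPhaseDeriv, Int.cast_natCast]
    field_simp
    ring
  have h_coeff := congrArg Complex.ofReal h_coeff
  push_cast at h_coeff
  rw [pruferTerm, prod_potentialTerm_mul_cexp_pow, h_coeff, mul_left_comm _ Complex.I,
    mul_left_comm _ Complex.I, ← mul_assoc Complex.I, div_eq_mul_inv, ← mul_assoc Complex.I,
    ← mul_assoc Complex.I, Complex.I_mul_I]
  ring

variable {w : ι → ℝ → ℝ} {T : ℝ≥0∞}

theorem intervalIntegrable_pruferTerm {m : Fin J → ι} (hab : a ≤ b) (hK : 1 ≤ K)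
    (hres : K * η ≠ ((List.ofFn m).map φ).sum) (hθ : IsPrimitiveOn θ θ' a b)
    (hγ : ∀ k, VariationMajorant (w k) (γ k) (Icc a b)) :
    IntervalIntegrable (pruferTerm η c φ γ θ θ' K m) volume a b := by
  rw [funext (pruferTerm_eq hK hres)]
  exact ((VariationMajorant.prod Finset.univ fun i => hγ (m i)).intervalIntegrable_mul hab
    ((isPrimitiveOn_wordPhase hθ K _).cexp_I_mul hab).intervalIntegrable).const_mul _

theorem norm_integral_pruferTerm_le {m : Fin J → ι} (hab : a ≤ b) (hK : 1 ≤ K)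
    (hres : K * η ≠ ((List.ofFn m).map φ).sum) (hθ : IsPrimitiveOn θ θ' a b)
    (hγ : ∀ k, VariationMajorant (w k) (γ k) (Icc a b)) :
    ‖∫ x in a..b, pruferTerm η c φ γ θ θ' K m x‖ ≤
      (K : ℝ)⁻¹ * ‖(∏ i, c (m i)) * (gWord η φ K (List.ofFn m) : ℂ)‖ * ∏ i, w (m i) a := by
  have h_parts := (VariationMajorant.prod Finset.univ fun i => hγ (m i)).norm_integral_mul_le hab
    ((isPrimitiveOn_wordPhase (η := η) (φ := φ) hθ K (List.ofFn m)).cexp_I_mul hab)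
    fun x _ => (Complex.norm_exp_I_mul_ofReal _).le
  have h_const : ‖Complex.I / (2 * K)‖ = (2 * K : ℝ)⁻¹ := by simp
  simp only [pruferTerm_eq hK hres]
  rw [intervalIntegral.integral_const_mul, norm_mul, norm_mul, h_const]
  refine (mul_le_mul_of_nonneg_left h_parts (by positivity)).trans_eq ?_
  field_simp

theorem enorm_integral_pruferTerm_le {m : Fin J → ι} (hab : a ≤ b) (hK : 1 ≤ K)
    (hres : K * η ≠ ((List.ofFn m).map φ).sum) (hθ : IsPrimitiveOn θ θ' a b)
    (hγ : ∀ k, VariationMajorant (w k) (γ k) (Icc a b)) (hT : ∀ k, ENNReal.ofReal (w k a) ≤ T) :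
    ‖∫ x in a..b, pruferTerm η c φ γ θ θ' K m x‖ₑ ≤
      (K : ℝ≥0∞)⁻¹ * ((∏ i, ‖c (m i)‖ₑ) * ‖gWord η φ K (List.ofFn m)‖ₑ) * T ^ J := by
  rw [← ofReal_norm]
  refine (ENNReal.ofReal_le_ofReal (norm_integral_pruferTerm_le hab hK hres hθ hγ)).trans ?_
  rw [ENNReal.ofReal_mul (by positivity), ENNReal.ofReal_mul (by positivity), ofReal_norm,
    enorm_mul, enorm_prod, enorm_complex_ofReal, ENNReal.ofReal_inv_of_pos (by positivity),
    ENNReal.ofReal_natCast,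
    ENNReal.ofReal_prod_of_nonneg fun i _ => (hγ (m i)).nonneg (left_mem_Icc.mpr hab)]
  gcongr
  exact (Finset.prod_le_prod' fun i _ => hT (m i)).trans_eq (by simp)

theorem enorm_potentialTerm_le {k : ι} (hγ : VariationMajorant (w k) (γ k) (Icc a b))
    (hT : ENNReal.ofReal (w k a) ≤ T) (hx : x ∈ Icc a b) :
    ‖potentialTerm c φ γ x k‖ₑ ≤ T * ‖c k‖ₑ := by
  rw [enorm_potentialTerm, ← ofReal_norm (γ k x)]
  gcongr
  exact (ENNReal.ofReal_le_ofReal ((hγ.norm_le x hx).trans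
    (hγ.antitoneOn (left_mem_Icc.mpr (hx.1.trans hx.2)) hx hx.1))).trans hT

theorem enorm_pruferTerm_le {m : Fin J → ι} (h : ∀ k, ‖potentialTerm c φ γ x k‖ₑ ≤ T * ‖c k‖ₑ) :
    ‖pruferTerm η c φ γ θ θ' K m x‖ₑ ≤
      T ^ J * ((∏ i, ‖c (m i)‖ₑ) * ‖fWord η φ K (List.ofFn m)‖ₑ +
        ‖θ' x‖ₑ * ((∏ i, ‖c (m i)‖ₑ) * ‖gWord η φ K (List.ofFn m)‖ₑ)) := by
  have h_exp : ‖Complex.exp (Complex.I * (η * x + 2 * θ x)) ^ K‖ₑ = 1 := by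
    have h_arg : (η * x + 2 * θ x : ℂ) = (η * x + 2 * θ x : ℝ) := by push_cast; rfl
    rw [h_arg, enorm_pow, Complex.enorm_exp_I_mul_ofReal, one_pow]
  have h_coeff : ‖(fWord η φ K (List.ofFn m) - θ' x * gWord η φ K (List.ofFn m) : ℂ)‖ₑ ≤
      ‖fWord η φ K (List.ofFn m)‖ₑ + ‖θ' x‖ₑ * ‖gWord η φ K (List.ofFn m)‖ₑ := by
    refine enorm_sub_le.trans_eq ?_
    rw [enorm_mul, enorm_complex_ofReal, enorm_complex_ofReal, enorm_complex_ofReal]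
  rw [pruferTerm, enorm_mul, enorm_mul, enorm_prod, h_exp, mul_one]
  calc _ ≤ (‖fWord η φ K (List.ofFn m)‖ₑ + ‖θ' x‖ₑ * ‖gWord η φ K (List.ofFn m)‖ₑ) *
        ∏ i, T * ‖c (m i)‖ₑ := by
        gcongr
        exact h _
    _ = _ := by
        rw [Finset.prod_mul_distrib, Finset.prod_const, Finset.card_univ, Fintype.card_fin]
        ring

theorem tsum_lintegral_pruferTerm_ne_top (hT : T ≠ ⊤)
    (h : ∀ x ∈ Icc a b, ∀ k, ‖potentialTerm c φ γ x k‖ₑ ≤ T * ‖c k‖ₑ)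
    (hθ' : IntervalIntegrable θ' volume a b)
    (hf : wordNorm (fun k => ‖c k‖ₑ) J (fWord η φ K) ≠ ⊤)
    (hg : wordNorm (fun k => ‖c k‖ₑ) J (gWord η φ K) ≠ ⊤) :
    ∑' m : Fin J → ι, ∫⁻ x in Ioc a b, ‖pruferTerm η c φ γ θ θ' K m x‖ₑ ≠ ⊤ := by
  have h_bound (m : Fin J → ι) : ∫⁻ x in Ioc a b, ‖pruferTerm η c φ γ θ θ' K m x‖ₑ ≤
      T ^ J * ((∏ i, ‖c (m i)‖ₑ) * ‖fWord η φ K (List.ofFn m)‖ₑ * volume (Ioc a b) +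
        (∫⁻ x in Ioc a b, ‖θ' x‖ₑ) * ((∏ i, ‖c (m i)‖ₑ) * ‖gWord η φ K (List.ofFn m)‖ₑ)) := by
    refine (setLIntegral_mono' measurableSet_Ioc fun x hx =>
      enorm_pruferTerm_le (h x (Ioc_subset_Icc_self hx))).trans_eq ?_
    have h_meas := hθ'.1.aestronglyMeasurable.enorm
    rw [lintegral_const_mul' _ _ (ENNReal.pow_ne_top hT),
      lintegral_add_left measurable_const, setLIntegral_const, lintegral_mul_const'' _ h_meas]
  refine ne_top_of_le_ne_top ?_ (ENNReal.tsum_le_tsum h_bound)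
  rw [ENNReal.tsum_mul_left, ENNReal.tsum_add, ENNReal.tsum_mul_right, ENNReal.tsum_mul_left]
  exact ENNReal.mul_ne_top (ENNReal.pow_ne_top hT) (ENNReal.add_ne_top.mpr
    ⟨ENNReal.mul_ne_top hf measure_Ioc_lt_top.ne, ENNReal.mul_ne_top hθ'.1.2.ne hg⟩)

end Prufer

end WordFun

namespace WordFun

section Prufer

open Set

variable {ι : Type*} {η : ℝ} {c : ι → ℂ} {φ : ι → ℝ} {γ : ι → ℝ → ℂ} {θ θ' V : ℝ → ℝ}
  {w : ι → ℝ → ℝ} {T : ℝ≥0∞} {J : ℕ} {a b x : ℝ}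

/-- The integrand `∑ S_{J,K} - ∑ S_{J+1,K}` of the theorem, over an arbitrary index set. -/
noncomputable def pruferRemainder (η : ℝ) (c : ι → ℂ) (φ : ι → ℝ) (γ : ι → ℝ → ℂ) (θ : ℝ → ℝ)
    (J : ℕ) (x : ℝ) : ℂ :=
  ∑ K ∈ Finset.Icc 1 J, wordSum (potentialTerm c φ γ x) J (fWord η φ K) *
      Complex.exp (Complex.I * (η * x + 2 * θ x)) ^ K -
    ∑ K ∈ Finset.range (J + 2), wordSum (potentialTerm c φ γ x) (J + 1) (fWord η φ K) *
      Complex.exp (Complex.I * (η * x + 2 * θ x)) ^ K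

theorem pruferRemainder_eq_tsum (hJ : 1 ≤ J) (hc : ∑' k, ‖c k‖ₑ ≠ ⊤)
    (hf : ∀ K, wordNorm (fun k => ‖c k‖ₑ) J (fWord η φ K) ≠ ⊤)
    (hg : ∀ K, wordNorm (fun k => ‖c k‖ₑ) J (gWord η φ K) ≠ ⊤) (hT : T ≠ ⊤)
    (h : ∀ k, ‖potentialTerm c φ γ x k‖ₑ ≤ T * ‖c k‖ₑ)
    (hV : (V x : ℂ) = ∑' k, potentialTerm c φ γ x k)
    (hθ' : θ' x = V x / η * (Real.cos (η * x + 2 * θ x) - 1)) :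
    pruferRemainder η c φ γ θ J x =
      ∑' m : Fin J → ι, ∑ K ∈ Finset.Icc 1 J, pruferTerm η c φ γ θ θ' K m x := by
  have h_norm {F : WordFun ι ℝ} (hF : wordNorm (fun k => ‖c k‖ₑ) J F ≠ ⊤) :
      wordNorm (fun k => ‖potentialTerm c φ γ x k‖ₑ) J F ≠ ⊤ :=
    ne_top_of_le_ne_top (ENNReal.mul_ne_top (ENNReal.pow_ne_top hT) hF) (wordNorm_le_pow_mul h J)
  have h_sum : ∑' k, ‖potentialTerm c φ γ x k‖ₑ ≠ ⊤ :=
    ne_top_of_le_ne_top (ENNReal.mul_ne_top hT hc)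
      ((ENNReal.tsum_le_tsum h).trans_eq ENNReal.tsum_mul_left)
  refine sum_wordSum_fWord_sub_eq_tsum hJ h_sum (fun K => h_norm (hf K)) (fun K => h_norm (hg K))
    (Complex.exp_ne_zero _) ?_
  rw [← hV, hθ', ← Complex.exp_neg]
  push_cast
  rw [Complex.cos, neg_mul, mul_comm Complex.I]

theorem enorm_integral_pruferRemainder_le [Countable ι] (hJ : 1 ≤ J) (hab : a ≤ b)
    (hres : NonresonantUpTo η φ J) (hc : ∑' k, ‖c k‖ₑ ≠ ⊤)
    (hf : ∀ K, wordNorm (fun k => ‖c k‖ₑ) J (fWord η φ K) ≠ ⊤)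
    (hg : ∀ K, wordNorm (fun k => ‖c k‖ₑ) J (gWord η φ K) ≠ ⊤)
    (hγ : ∀ k, VariationMajorant (w k) (γ k) (Icc a b)) (hT : T ≠ ⊤)
    (hwT : ∀ k, ENNReal.ofReal (w k a) ≤ T)
    (hV : ∀ x ∈ Ioc a b, (V x : ℂ) = ∑' k, potentialTerm c φ γ x k)
    (hθ : IsPrimitiveOn θ θ' a b)
    (hθ' : ∀ᵐ x ∂volume.restrict (Ioc a b),
      θ' x = V x / η * (Real.cos (η * x + 2 * θ x) - 1)) :
    ‖∫ x in a..b, pruferRemainder η c φ γ θ J x‖ₑ ≤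
      ∑ K ∈ Finset.Icc 1 J,
        (K : ℝ≥0∞)⁻¹ * wordNorm (fun k => ‖c k‖ₑ) J (gWord η φ K) * T ^ J := by
  have h_pot (x : ℝ) (hx : x ∈ Icc a b) (k : ι) : ‖potentialTerm c φ γ x k‖ₑ ≤ T * ‖c k‖ₑ :=
    enorm_potentialTerm_le (hγ k) (hwT k) hx
  have h_series : ∫ x in a..b, pruferRemainder η c φ γ θ J x =
      ∫ x in Ioc a b, ∑' m : Fin J → ι, ∑ K ∈ Finset.Icc 1 J, pruferTerm η c φ γ θ θ' K m x := by
    rw [intervalIntegral.integral_of_le hab]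
    refine integral_congr_ae ?_
    filter_upwards [hθ', ae_restrict_mem measurableSet_Ioc] with x hx hx_mem
    exact pruferRemainder_eq_tsum hJ hc hf hg hT (h_pot x (Ioc_subset_Icc_self hx_mem))
      (hV x hx_mem) hx
  have h_res {K : ℕ} (hK : K ∈ Finset.Icc 1 J) (m : Fin J → ι) :
      K * η ≠ ((List.ofFn m).map φ).sum := by
    rw [Finset.mem_Icc] at hK
    exact hres K _ hK.1 (by simpa using hK.2) (by simp)
  have h_le := enorm_integral_tsum_sum_le (μ := volume.restrict (Ioc a b)) (Finset.Icc 1 J)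
    (f := fun K (m : Fin J → ι) => pruferTerm η c φ γ θ θ' K m)
    (fun K hK m =>
      (intervalIntegrable_pruferTerm hab (Finset.mem_Icc.mp hK).1 (h_res hK m) hθ hγ).1)
    fun K _ => tsum_lintegral_pruferTerm_ne_top hT h_pot hθ.intervalIntegrable (hf K) (hg K)
  rw [h_series]
  refine h_le.trans (Finset.sum_le_sum fun K hK => ?_)
  rw [wordNorm, ← ENNReal.tsum_mul_left, ← ENNReal.tsum_mul_right]
  refine ENNReal.tsum_le_tsum fun m => ?_
  rw [← intervalIntegral.integral_of_le hab]
  exact enorm_integral_pruferTerm_le hab (Finset.mem_Icc.mp hK).1 (h_res hK m) hθ hγ hwT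

end Prufer

end WordFun

namespace WordFun

variable {η : ℝ} {c : ℕ → ℂ} {φ : ℕ → ℝ} {γ : ℕ → ℝ → ℂ} {θ : ℝ → ℝ} {J : ℕ}

theorem EFun_eq_wordNorm (η : ℝ) (c : ℕ → ℂ) (φ : ℕ → ℝ) (J : ℕ) (K : ℤ) :
    EFun η c φ J K = wordNorm (fun k => ‖c k‖ₑ) J (gWord η φ K) := by
  refine tsum_congr fun m => ?_
  rw [gWord_apply, List.length_ofFn, padFin_eq_freq, ← enorm_eq_nnnorm, ← enorm_eq_nnnorm,
    enorm_prod]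

theorem SFun_eq_wordSum_mul_pow (η : ℝ) (c : ℕ → ℂ) (φ : ℕ → ℝ) (γ : ℕ → ℝ → ℂ) (θ : ℝ → ℝ)
    (J K : ℕ) (x : ℝ) :
    SFun η c φ γ θ J K x = wordSum (potentialTerm c φ γ x) J (fWord η φ K) *
      Complex.exp (Complex.I * (η * x + 2 * θ x)) ^ K := by
  rw [wordSum, ← tsum_mul_right]
  refine tsum_congr fun m => ?_
  rw [fWord_apply, List.length_ofFn, padFin_eq_freq, ← Complex.exp_nat_mul, mul_left_comm,
    ← mul_assoc Complex.I]
  rfl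

theorem wordNorm_hWord_ne_top
    (h : 1 ≤ J → Summable fun m : Fin J → ℕ => ‖∏ i, c (m i)‖ * |hFun J η (padFin J φ m)|) :
    wordNorm (fun k => ‖c k‖ₑ) J (hWord η φ) ≠ ⊤ := by
  rcases J.eq_zero_or_pos with rfl | hJ
  · rw [wordNorm_zero]
    exact enorm_ne_top
  have h_top := tsum_enorm_ne_top_iff_summable_norm.mpr (h hJ).norm
  refine ne_top_of_le_ne_top (ENNReal.mul_ne_top (a := ‖η⁻¹ ^ J‖ₑ) enorm_ne_top h_top) ?_
  rw [wordNorm, ← ENNReal.tsum_mul_left]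
  refine ENNReal.tsum_le_tsum fun m => ?_
  rw [hWord_apply, List.length_ofFn, padFin_eq_freq, enorm_mul, enorm_mul, enorm_norm, enorm_prod,
    ← Real.norm_eq_abs, enorm_norm, mul_left_comm]

theorem wordNorm_fWord_ne_top {ι : Type*} {w : ι → ℝ≥0∞} {φ : ι → ℝ} (hJ : 1 ≤ J)
    (hres : NonresonantUpTo η φ J) (hw : ∑' k, w k ≠ ⊤)
    (hh : ∀ j ≤ J, wordNorm w j (hWord η φ) ≠ ⊤) (K : ℤ) : wordNorm w J (fWord η φ K) ≠ ⊤ := by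
  obtain ⟨J, rfl⟩ := Nat.exists_eq_add_of_le' hJ
  exact wordNorm_fWord_succ_ne_top hw (wordNorm_gWord_ne_top
    (fun K l hK hKl hl => hres K l hK hKl (hl.trans J.le_succ))
    fun j hj => hh j (hj.trans J.le_succ)) K

theorem NonresonantUpTo.of_forall_ne_sum {ι : Type*} {φ : ι → ℝ} {n : ℕ}
    (h : ∀ K J : ℕ, 1 ≤ K → K ≤ J → J ≤ n → ∀ m : Fin J → ι, K * η ≠ ∑ i, φ (m i)) :
    NonresonantUpTo η φ n := by
  intro K l hK hKl hl
  rw [← List.ofFn_get l, List.map_ofFn, List.sum_ofFn]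
  exact h K _ hK hKl hl l.get

end WordFun

theorem tendsto_zero_of_lintegral_iSup_pow_lt_top {κ E : Type*} [NormedAddCommGroup E]
    [CompleteSpace E] {γ : κ → ℝ → E} {c : ℝ} {p : ℕ}
    (hBV : ⨆ k, eVariationOn (γ k) (Set.Ioi c) < ⊤)
    (hLp : ∫⁻ x in Set.Ioi c, (⨆ k, ‖γ k x‖ₑ) ^ p < ⊤) (k : κ) :
    Filter.Tendsto (γ k) Filter.atTop (nhds 0) := by
  refine tendsto_zero_of_boundedVariationOn_of_lintegral_ne_top (p := p)
    (ne_top_of_le_ne_top hBV.ne (le_iSup (fun k => eVariationOn (γ k) (Set.Ioi c)) k))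
    (ne_top_of_le_ne_top hLp.ne (lintegral_mono fun x => ?_))
  gcongr
  exact le_iSup (fun k => ‖γ k x‖ₑ) k

open WordFun in
theorem stmt11_general {η : ℝ} (_hη : η ≠ 0) {c : ℕ → ℂ} {φ : ℕ → ℝ} {γ : ℕ → ℝ → ℂ}
    {V θ θ' : ℝ → ℝ} {J : ℕ} (hJ : 1 ≤ J)
    (hV : ∀ x ∈ Set.Ioi (0 : ℝ),
      (V x : ℂ) = ∑' k, c k * Complex.exp (-Complex.I * (φ k) * x) * γ k x)
    (hBV : ⨆ k, eVariationOn (γ k) (Set.Ioi 0) < ⊤)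
    (hγ : ∀ k, Filter.Tendsto (γ k) Filter.atTop (nhds 0))
    (hc : Summable fun k => ‖c k‖)
    (hsd : ∀ j : ℕ, 1 ≤ j → j ≤ J →
      Summable fun m : Fin j → ℕ => ‖∏ i, c (m i)‖ * |hFun j η (padFin j φ m)|)
    (hres : NonresonantUpTo η φ J)
    (hθAC : ∀ a b : ℝ, 0 < a → a ≤ b →
      IntervalIntegrable θ' volume a b ∧ θ b - θ a = ∫ x in a..b, θ' x)
    (hθ' : ∀ᵐ x ∂(volume.restrict (Set.Ioi (0 : ℝ))),
      θ' x = (V x / η) * (Real.cos (η * x + 2 * θ x) - 1))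
    {a b : ℝ} (ha : 0 ≤ a) (hab : a < b) :
    ‖∫ x in a..b, ((∑ K ∈ Finset.Icc 1 J, SFun η c φ γ θ J K x) -
        ∑ K ∈ Finset.range (J + 2), SFun η c φ γ θ (J + 1) K x)‖ₑ ≤
      ∑ K ∈ Finset.Icc 1 J, (K : ℝ≥0∞)⁻¹ * EFun η c φ J K *
        (⨆ k, eVariationOn (γ k) (Set.Ioi 0)) ^ J := by
  set T := ⨆ k, eVariationOn (γ k) (Set.Ioi 0)
  have hγT (k : ℕ) : eVariationOn (γ k) (Set.Ioi 0) ≤ T :=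
    le_iSup (fun k => eVariationOn (γ k) (Set.Ioi 0)) k
  have hw : ∑' k, ‖c k‖ₑ ≠ ⊤ := tsum_enorm_ne_top_iff_summable_norm.mpr hc
  have hh (j : ℕ) (hj : j ≤ J) : wordNorm (fun k => ‖c k‖ₑ) j (hWord η φ) ≠ ⊤ :=
    wordNorm_hWord_ne_top fun h => hsd j h hj
  simp only [SFun_eq_wordSum_mul_pow, EFun_eq_wordNorm]
  refine enorm_integral_le_of_forall_gt hab fun x hx => ?_
  have hx0 : 0 < x := ha.trans_lt hx.1
  exact enorm_integral_pruferRemainder_le hJ hx.2 hres hw (wordNorm_fWord_ne_top hJ hres hw hh)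
    (wordNorm_gWord_ne_top hres hh)
    (fun k => (variationMajorant_eVariationOn_Ici (ne_top_of_le_ne_top hBV.ne (hγT k))
      (hγ k)).mono fun t ht => hx0.trans_le ht.1)
    hBV.ne
    (fun k => ENNReal.ofReal_toReal_le.trans
      ((eVariationOn.mono _ (Set.Ici_subset_Ioi.mpr hx0)).trans (hγT k)))
    (fun t ht => hV t (hx0.trans ht.1))
    (.of_forall_sub_eq (hθAC x b hx0 hx.2).1 fun t ht => (hθAC x t hx0 ht.1).2)
    (ae_restrict_of_ae_restrict_of_subset (fun t ht => hx0.trans ht.1) hθ')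

theorem stmt11 (p : ℕ) (hp : 2 ≤ p) (η : ℝ) (hη : 0 < η)
    (c : ℕ → ℂ) (φ : ℕ → ℝ) (γ : ℕ → ℝ → ℂ)
    (V : ℝ → ℝ)
    (hV : ∀ x ∈ Set.Ioi (0:ℝ),
      (V x : ℂ) = ∑' k, c k * Complex.exp (-Complex.I * (φ k) * x) * γ k x)
    (hBV : ⨆ k, eVariationOn (γ k) (Set.Ioi 0) < ⊤)
    (hLp : ∫⁻ x in Set.Ioi (0:ℝ), (⨆ k, (‖γ k x‖₊ : ℝ≥0∞)) ^ p < ⊤)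
    (hc : Summable fun k => ‖c k‖)
    (hsd : ∀ j : ℕ, 1 ≤ j → j ≤ p - 1 →
      Summable fun m : Fin j → ℕ => ‖∏ i, c (m i)‖ * |hFun j η (padFin j φ m)|)
    (hres : ∀ K J : ℕ, 1 ≤ K → K ≤ J → J ≤ p → ∀ (m : Fin J → ℕ) (ε : Fin J → ℝ),
      (∀ i, ε i = 1 ∨ ε i = -1) → (K : ℝ) * η ≠ ∑ i, ε i * φ (m i))
    (θ θ' : ℝ → ℝ)
    (hθAC : ∀ a b : ℝ, 0 < a → a ≤ b →
      IntervalIntegrable θ' volume a b ∧ θ b - θ a = ∫ x in a..b, θ' x)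
    (hθ' : ∀ᵐ x ∂(volume.restrict (Set.Ioi (0:ℝ))),
      θ' x = (V x / η) * (Real.cos (η * x + 2 * θ x) - 1)) :
    ∀ J : ℕ, 1 ≤ J → J ≤ p - 1 → ∀ a b : ℝ, 0 ≤ a → a < b →
      ENNReal.ofReal
          ‖∫ x in a..b,
              ((∑ K ∈ Finset.Icc 1 J, SFun η c φ γ θ J K x) -
                ∑ K ∈ Finset.range (J + 2), SFun η c φ γ θ (J + 1) K x)‖
        ≤ ∑ K ∈ Finset.Icc 1 J,
            (K : ℝ≥0∞)⁻¹ * EFun η c φ J (K : ℤ) *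
              (⨆ k, eVariationOn (γ k) (Set.Ioi 0)) ^ J := by
  intro J hJ hJp a b ha hab
  rw [ofReal_norm]
  exact stmt11_general hη.ne' hJ hV hBV (tendsto_zero_of_lintegral_iSup_pow_lt_top hBV hLp) hc
    (fun j hj hjJ => hsd j hj (hjJ.trans hJp))
    (.of_forall_ne_sum fun K j hK hKj hj m => by
      simpa using hres K j hK hKj (by omega) m 1 fun _ => .inl rfl)
    hθAC hθ' ha hab
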